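/- arXiv:2503.00869 — 5 statements merged into one kernel-verified Lean document; each statement's English description precedes it below -/
import Mathlib

section
/- Let Ω ⊂ ℝⁿ be open, let p ≥ 2, let k ∈ {1,…,n}, and let u ∈ C²(Ω) be bounded on Ω with ‖u‖_∞ = sup_Ω |u|. Then there exist constants C = C(n,p) > 0 and γ = γ(p) > 0 such that for every pair of concentric balls B_ρ ⊂ B_R ⋐ Ω: ∫_{B_ρ} |u_{x_k}|^{p+2} dx ≤ C ‖u‖_∞² ( ∫_{B_R} |u_{x_k x_k}|² |u_{x_k}|^{p−2} dx + (1/(R−ρ))^γ ∫_{B_R} |u_{x_k}|^{p} dx ). -/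
open MeasureTheory Metric

/-- The `k`-th partial derivative of `u`. -/
noncomputable def pderiv1 {n : ℕ} (u : EuclideanSpace ℝ (Fin n) → ℝ) (k : Fin n)
    (x : EuclideanSpace ℝ (Fin n)) : ℝ :=
  fderiv ℝ u x (EuclideanSpace.single k 1)

/-!
Write `v` for the derivative of `u` in a direction `e`. Integrating the `e`-derivative of
`η² u |v|ᵖ v` over the support of a cutoff `η` gives
`∫ η² |v|^(p+2) = -∫ u (2 η ∂ₑη |v|ᵖ v + (p + 1) η² |v|ᵖ ∂ₑv)`,
and Young's inequality bounds each of the two products on the right by a quarter of the left-hand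
side plus a multiple of `‖u‖_∞² ∫ (∂ₑη)² |v|ᵖ`, respectively of `‖u‖_∞² ∫ η² |∂ₑv|² |v|^(p-2)`. A
cutoff between the balls of radii `ρ` and `R` can be chosen with gradient at most `4 / (R - ρ)`,
whence `γ = 2`.
-/

theorem tsupport_sq_subset {X : Type*} [TopologicalSpace X] (η : X → ℝ) :
    tsupport (fun x => η x ^ 2) ⊆ tsupport η :=
  closure_mono fun x hx h => hx (by simp [h])

section RealFunctions

theorem hasDerivAt_abs_rpow_mul_self {p : ℝ} (hp : 0 < p) (t : ℝ) :
    HasDerivAt (fun s : ℝ => |s| ^ p * s) ((p + 1) * |t| ^ p) t := by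
  have hcont : Continuous fun s : ℝ => |s| ^ p :=
    continuous_abs.rpow_const fun _ => Or.inr hp.le
  refine hasDerivAt_of_hasDerivAt_of_ne' (x := 0) (g := fun s => (p + 1) * |s| ^ p)
    (fun s hs => ?_) (by fun_prop) (continuous_const.mul hcont).continuousAt t
  have habs : HasDerivAt (fun s : ℝ => |s|) (SignType.sign s : ℝ) s := hasDerivAt_abs hs
  refine ((habs.rpow_const (p := p) (Or.inl (abs_ne_zero.2 hs))).mul
    (hasDerivAt_id' s)).congr_deriv ?_
  have hsign : (SignType.sign s : ℝ) * s = |s| := sign_mul_self s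
  have hpow : |s| ^ (p - 1) * |s| = |s| ^ p := by
    rw [← Real.rpow_add_one (abs_ne_zero.2 hs), sub_add_cancel]
  linear_combination p * |s| ^ (p - 1) * hsign + p * hpow

theorem contDiff_abs_rpow_mul_self {p : ℝ} (hp : 0 < p) :
    ContDiff ℝ 1 fun t : ℝ => |t| ^ p * t := by
  refine contDiff_one_iff_deriv.2
    ⟨fun t => (hasDerivAt_abs_rpow_mul_self hp t).differentiableAt, ?_⟩
  rw [funext fun t => (hasDerivAt_abs_rpow_mul_self hp t).deriv]
  exact continuous_const.mul (continuous_abs.rpow_const fun _ => Or.inr hp.le)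

theorem abs_rpow_add_two {q : ℝ} (hq : q + 2 ≠ 0) (t : ℝ) : |t| ^ (q + 2) = |t| ^ q * t ^ 2 := by
  simpa using Real.rpow_add_natCast' (n := 2) (abs_nonneg t) (by simpa using hq)

theorem hasDerivAt_posPart_sq (t : ℝ) : HasDerivAt (fun s : ℝ => s⁺ ^ 2) (2 * t⁺) t := by
  refine hasDerivAt_of_hasDerivAt_of_ne' (x := 0) (g := fun s => 2 * s⁺)
    (fun s hs => ?_) (by fun_prop) (by fun_prop) t
  rcases hs.lt_or_gt with hneg | hpos
  · refine ((hasDerivAt_const s (0 : ℝ)).congr_of_eventuallyEq ?_).congr_deriv ?_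
    · filter_upwards [Iio_mem_nhds hneg] with y (hy : y < 0)
      simp [posPart_of_nonpos hy.le]
    · simp [posPart_of_nonpos hneg.le]
  · refine ((hasDerivAt_pow 2 s).congr_of_eventuallyEq ?_).congr_deriv ?_
    · filter_upwards [Ioi_mem_nhds hpos] with y (hy : 0 < y)
      rw [posPart_of_nonneg hy.le]
    · simp [posPart_of_nonneg hpos.le]

/-- A `C¹` transition from `0` on `(-∞, 0]` to `1` on `[1, ∞)`. Unlike for
`Real.smoothTransition`, an explicit bound for its derivative is at hand. -/
noncomputable def quadraticTransition (t : ℝ) : ℝ := (1 - (1 - t)⁺ ^ 2)⁺ ^ 2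

namespace quadraticTransition

theorem eq_zero {t : ℝ} (ht : t ≤ 0) : quadraticTransition t = 0 := by
  have h : 1 - (1 - t) ^ 2 ≤ 0 := by nlinarith
  simp [quadraticTransition, posPart_of_nonneg (by linarith : 0 ≤ 1 - t), posPart_of_nonpos h]

theorem eq_one {t : ℝ} (ht : 1 ≤ t) : quadraticTransition t = 1 := by
  simp [quadraticTransition, posPart_of_nonpos (by linarith : 1 - t ≤ 0)]

theorem nonneg (t : ℝ) : 0 ≤ quadraticTransition t := sq_nonneg _

theorem le_one (t : ℝ) : quadraticTransition t ≤ 1 :=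
  pow_le_one₀ (posPart_nonneg _) <|
    sup_le (sub_le_self 1 (sq_nonneg _)) zero_le_one

theorem hasDerivAt (t : ℝ) :
    HasDerivAt quadraticTransition (4 * ((1 - (1 - t)⁺ ^ 2)⁺ * (1 - t)⁺)) t := by
  have hinner := (hasDerivAt_posPart_sq (1 - t)).comp t ((hasDerivAt_id' t).const_sub 1)
  refine ((hasDerivAt_posPart_sq _).comp t (hinner.const_sub 1)).congr_deriv ?_
  simp only [Function.comp_apply]
  ring

theorem abs_deriv_le (t : ℝ) : |deriv quadraticTransition t| ≤ 2 := by
  rw [(hasDerivAt t).deriv, abs_of_nonneg (by positivity)]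
  have hb : 0 ≤ (1 - t)⁺ := posPart_nonneg _
  generalize (1 - t)⁺ = b at *
  rcases le_total b 1 with hb1 | hb1
  · rw [posPart_of_nonneg (by nlinarith)]
    nlinarith [mul_nonneg hb (sq_nonneg (2 * b - 1))]
  · simp [posPart_of_nonpos (by nlinarith : 1 - b ^ 2 ≤ 0)]

theorem contDiff : ContDiff ℝ 1 quadraticTransition := by
  refine contDiff_one_iff_deriv.2 ⟨fun t => (hasDerivAt t).differentiableAt, ?_⟩
  rw [funext fun t => (hasDerivAt t).deriv]
  fun_prop

end quadraticTransition

end RealFunctions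

section DirectionalDerivative

variable {E : Type*} [NormedAddCommGroup E] [NormedSpace ℝ E] {e : E} {Ω : Set E}
  {u η : E → ℝ}

/-- The derivative of `u` in the direction `e`, as a function on the space. -/
noncomputable def dirDeriv (e : E) (u : E → ℝ) (x : E) : ℝ := fderiv ℝ u x e

theorem contDiffOn_dirDeriv {m n : WithTop ℕ∞} (hΩ : IsOpen Ω) (hu : ContDiffOn ℝ n u Ω)
    (hmn : m + 1 ≤ n) : ContDiffOn ℝ m (dirDeriv e u) Ω :=
  (hu.fderiv_of_isOpen hΩ hmn).clm_apply contDiffOn_const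

theorem continuous_dirDeriv (e : E) (hη : ContDiff ℝ 1 η) : Continuous (dirDeriv e η) :=
  (hη.continuous_fderiv one_ne_zero).clm_apply continuous_const

theorem continuousOn_abs_dirDeriv_rpow {q : ℝ} (hq : 0 ≤ q) (hΩ : IsOpen Ω)
    (hu : ContDiffOn ℝ 1 u Ω) (e : E) : ContinuousOn (fun x => |dirDeriv e u x| ^ q) Ω :=
  (contDiffOn_zero.1 (contDiffOn_dirDeriv hΩ hu (zero_add 1).le)).abs.rpow_const
    fun _ _ => Or.inr hq

theorem continuousOn_sq_abs_dirDeriv_dirDeriv_mul_rpow {q : ℝ} (hq : 0 ≤ q) (hΩ : IsOpen Ω)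
    (hu : ContDiffOn ℝ 2 u Ω) (e : E) :
    ContinuousOn (fun x => |dirDeriv e (dirDeriv e u) x| ^ 2 * |dirDeriv e u x| ^ q) Ω :=
  have hv : ContDiffOn ℝ 1 (dirDeriv e u) Ω := contDiffOn_dirDeriv hΩ hu one_add_one_eq_two.le
  ((contDiffOn_zero.1 (contDiffOn_dirDeriv hΩ hv (zero_add 1).le)).abs.pow 2).mul
    (continuousOn_abs_dirDeriv_rpow hq hΩ (hu.of_le one_le_two) e)

theorem tsupport_dirDeriv_subset (e : E) (η : E → ℝ) :
    tsupport (dirDeriv e η) ⊆ tsupport η :=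
  tsupport_fderiv_apply_subset ℝ e

theorem contDiff_mul_of_tsupport_subset {n : WithTop ℕ∞} {g : E → ℝ} (hη : ContDiff ℝ n η)
    (hΩ : IsOpen Ω) (hg : ContDiffOn ℝ n g Ω) (hηΩ : tsupport η ⊆ Ω) :
    ContDiff ℝ n fun x => η x * g x := by
  refine contDiff_iff_contDiffAt.2 fun x => ?_
  by_cases hx : x ∈ tsupport η
  · exact hη.contDiffAt.mul (hg.contDiffAt (hΩ.mem_nhds (hηΩ hx)))
  · refine contDiffAt_const (c := (0 : ℝ)) |>.congr_of_eventuallyEq ?_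
    filter_upwards [notMem_tsupport_iff_eventuallyEq.1 hx] with y hy
    simp [hy]

section Integral

variable [MeasurableSpace E] [BorelSpace E] {μ : Measure E}

theorem integrable_sq_mul_of_tsupport_subset [IsFiniteMeasureOnCompacts μ] {g : E → ℝ}
    (hη : Continuous η) (hηc : HasCompactSupport η) (hΩ : IsOpen Ω) (hg : ContinuousOn g Ω)
    (hηΩ : tsupport η ⊆ Ω) : Integrable (fun x => η x ^ 2 * g x) μ := by
  have hcont : ContDiff ℝ 0 fun x => η x ^ 2 * g x :=
    contDiff_mul_of_tsupport_subset (contDiff_zero.2 (hη.pow 2)) hΩ (contDiffOn_zero.2 hg)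
      ((tsupport_sq_subset η).trans hηΩ)
  have hsq : HasCompactSupport fun x => η x ^ 2 :=
    hηc.mono' ((subset_tsupport _).trans (tsupport_sq_subset η))
  exact hcont.continuous.integrable_of_hasCompactSupport hsq.mul_right

theorem integrable_dirDeriv [IsFiniteMeasureOnCompacts μ] (e : E) (hη : ContDiff ℝ 1 η)
    (hηc : HasCompactSupport η) : Integrable (dirDeriv e η) μ :=
  (continuous_dirDeriv e hη).integrable_of_hasCompactSupport (hηc.fderiv_apply ℝ e)

theorem integral_dirDeriv_eq_zero [FiniteDimensional ℝ E] [μ.IsAddHaarMeasure] (e : E)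
    (hη : ContDiff ℝ 1 η) (hηc : HasCompactSupport η) : ∫ x, dirDeriv e η x ∂μ = 0 := by
  have hint : Integrable (fun x => fderiv ℝ η x e) μ := integrable_dirDeriv e hη hηc
  simpa using!
    integral_mul_fderiv_eq_neg_fderiv_mul_of_integrable (μ := μ) (f := fun _ => (1 : ℝ)) (g := η)
      (v := e) (by simp) (by simpa using hint)
      (by simpa using hη.continuous.integrable_of_hasCompactSupport hηc)
      (fun _ _ => differentiableAt_const _) fun x _ => hη.differentiable one_ne_zero x

end Integral

end DirectionalDerivative

section WeightedEstimate

variable {E : Type*} [NormedAddCommGroup E] [NormedSpace ℝ E] {Ω : Set E} {u η : E → ℝ}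
  {p M : ℝ} {x : E}

/-- The function `η² u |∂ₑu|ᵖ ∂ₑu`, whose `e`-derivative has the integrand `η² |∂ₑu|^(p+2)` of the
interpolation estimate as one of its terms. -/
noncomputable def interpolationFlux (η u : E → ℝ) (p : ℝ) (e x : E) : ℝ :=
  η x ^ 2 * (u x * (|dirDeriv e u x| ^ p * dirDeriv e u x))

theorem contDiff_interpolationFlux (hp : 0 < p) (hΩ : IsOpen Ω) (hu : ContDiffOn ℝ 2 u Ω)
    (hη : ContDiff ℝ 1 η) (hηΩ : tsupport η ⊆ Ω) (e : E) :
    ContDiff ℝ 1 (interpolationFlux η u p e) :=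
  contDiff_mul_of_tsupport_subset (hη.pow 2) hΩ
    ((hu.of_le one_le_two).mul
      ((contDiff_abs_rpow_mul_self hp).comp_contDiffOn
        (contDiffOn_dirDeriv hΩ hu one_add_one_eq_two.le)))
    ((tsupport_sq_subset η).trans hηΩ)

theorem tsupport_interpolationFlux_subset (η u : E → ℝ) (p : ℝ) (e : E) :
    tsupport (interpolationFlux η u p e) ⊆ tsupport η :=
  tsupport_mul_subset_left.trans (tsupport_sq_subset η)

theorem dirDeriv_interpolationFlux (hp : 0 < p) (e : E) (hη : DifferentiableAt ℝ η x)
    (hu : DifferentiableAt ℝ u x) (hv : DifferentiableAt ℝ (dirDeriv e u) x) :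
    dirDeriv e (interpolationFlux η u p e) x =
      η x ^ 2 * |dirDeriv e u x| ^ (p + 2) +
        u x * |dirDeriv e u x| ^ p * (2 * η x * dirDeriv e η x * dirDeriv e u x +
          (p + 1) * η x ^ 2 * dirDeriv e (dirDeriv e u) x) := by
  have hpow := (hasDerivAt_abs_rpow_mul_self hp (dirDeriv e u x)).comp_hasFDerivAt x
    hv.hasFDerivAt
  have hflux : HasFDerivAt (interpolationFlux η u p e) _ x :=
    (hη.hasFDerivAt.pow 2).mul (hu.hasFDerivAt.mul hpow)
  rw [abs_rpow_add_two (by positivity), dirDeriv, hflux.fderiv]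
  simp only [smul_add, Nat.add_one_sub_one, pow_one, nsmul_eq_mul, Nat.cast_ofNat, add_apply,
    smul_apply, ← dirDeriv.eq_def, smul_eq_mul]
  ring

-- The spare `η² v⁴` is shared equally between the Young inequalities for the two products with `u`,
-- which is where the constants `2 a²` and `8` come from.
theorem young_absorption_le (η ζ u v w a : ℝ) :
    η ^ 2 * v ^ 4 ≤
      2 * (η ^ 2 * v ^ 4 + u * v ^ 2 * (2 * η * ζ * v + a * η ^ 2 * w)) +
        u ^ 2 * (2 * a ^ 2 * η ^ 2 * w ^ 2 + 8 * ζ ^ 2 * v ^ 2) := by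
  linear_combination 2 * sq_nonneg (η * v ^ 2 / 2 + a * u * η * w) +
    2 * sq_nonneg (η * v ^ 2 / 2 + 2 * u * ζ * v)

theorem sq_mul_abs_dirDeriv_rpow_le (hp : 0 < p) (e : E) (hη : DifferentiableAt ℝ η x)
    (hu : DifferentiableAt ℝ u x) (hv : DifferentiableAt ℝ (dirDeriv e u) x) (hM : |u x| ≤ M) :
    η x ^ 2 * |dirDeriv e u x| ^ (p + 2) ≤
      2 * dirDeriv e (interpolationFlux η u p e) x +
        M ^ 2 * (2 * (p + 1) ^ 2 *
          (η x ^ 2 * (|dirDeriv e (dirDeriv e u) x| ^ 2 * |dirDeriv e u x| ^ (p - 2))) +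
            8 * (dirDeriv e η x ^ 2 * |dirDeriv e u x| ^ p)) := by
  rw [dirDeriv_interpolationFlux hp e hη hu hv, abs_rpow_add_two (by positivity), sq_abs]
  have hvp : |dirDeriv e u x| ^ p = |dirDeriv e u x| ^ (p - 2) * dirDeriv e u x ^ 2 := by
    simpa using abs_rpow_add_two (q := p - 2) (by simpa using hp.ne') (dirDeriv e u x)
  rw [hvp]
  have hq : 0 ≤ |dirDeriv e u x| ^ (p - 2) := by positivity
  generalize |dirDeriv e u x| ^ (p - 2) = q at *
  generalize dirDeriv e u x = v, dirDeriv e (dirDeriv e u) x = w, dirDeriv e η x = ζ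
  have hu2 : u x ^ 2 ≤ M ^ 2 := sq_le_sq.2 (hM.trans (le_abs_self M))
  calc η x ^ 2 * (q * v ^ 2 * v ^ 2)
      = q * (η x ^ 2 * v ^ 4) := by ring
    _ ≤ q * (2 * (η x ^ 2 * v ^ 4 + u x * v ^ 2 * (2 * η x * ζ * v + (p + 1) * η x ^ 2 * w)) +
          u x ^ 2 * (2 * (p + 1) ^ 2 * η x ^ 2 * w ^ 2 + 8 * ζ ^ 2 * v ^ 2)) := by
        gcongr
        exact young_absorption_le _ _ _ _ _ _
    _ ≤ q * (2 * (η x ^ 2 * v ^ 4 + u x * v ^ 2 * (2 * η x * ζ * v + (p + 1) * η x ^ 2 * w)) +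
          M ^ 2 * (2 * (p + 1) ^ 2 * η x ^ 2 * w ^ 2 + 8 * ζ ^ 2 * v ^ 2)) := by
        gcongr
    _ = _ := by ring

theorem sq_mul_abs_dirDeriv_rpow_le_of_tsupport_subset (hp : 0 < p) (hΩ : IsOpen Ω)
    (hu : ContDiffOn ℝ 2 u Ω) (hM : ∀ x ∈ Ω, |u x| ≤ M) (hη : Differentiable ℝ η)
    (hηΩ : tsupport η ⊆ Ω) (e x : E) :
    η x ^ 2 * |dirDeriv e u x| ^ (p + 2) ≤
      2 * dirDeriv e (interpolationFlux η u p e) x +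
        M ^ 2 * (2 * (p + 1) ^ 2 *
          (η x ^ 2 * (|dirDeriv e (dirDeriv e u) x| ^ 2 * |dirDeriv e u x| ^ (p - 2))) +
            8 * (dirDeriv e η x ^ 2 * |dirDeriv e u x| ^ p)) := by
  by_cases hx : x ∈ tsupport η
  · have hxΩ := hΩ.mem_nhds (hηΩ hx)
    exact sq_mul_abs_dirDeriv_rpow_le hp e (hη x)
      ((hu.contDiffAt hxΩ).differentiableAt two_ne_zero)
      (((contDiffOn_dirDeriv hΩ hu one_add_one_eq_two.le).contDiffAt hxΩ).differentiableAt
        one_ne_zero) (hM x (hηΩ hx))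
  · have hflux := image_eq_zero_of_notMem_tsupport fun h =>
      hx (tsupport_interpolationFlux_subset η u p e (tsupport_dirDeriv_subset e _ h))
    have hdη := image_eq_zero_of_notMem_tsupport fun h => hx (tsupport_dirDeriv_subset e η h)
    simp [image_eq_zero_of_notMem_tsupport hx, hflux, hdη]

theorem integral_sq_mul_abs_dirDeriv_rpow_le [FiniteDimensional ℝ E] [MeasurableSpace E]
    [BorelSpace E] (μ : Measure E) [μ.IsAddHaarMeasure] (hp : 2 ≤ p) (hΩ : IsOpen Ω)
    (hu : ContDiffOn ℝ 2 u Ω) (hM : ∀ x ∈ Ω, |u x| ≤ M) (hη : ContDiff ℝ 1 η)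
    (hηc : HasCompactSupport η) (hηΩ : tsupport η ⊆ Ω) (e : E) :
    ∫ x, η x ^ 2 * |dirDeriv e u x| ^ (p + 2) ∂μ ≤
      M ^ 2 * (2 * (p + 1) ^ 2 *
        (∫ x, η x ^ 2 * (|dirDeriv e (dirDeriv e u) x| ^ 2 * |dirDeriv e u x| ^ (p - 2)) ∂μ) +
          8 * ∫ x, dirDeriv e η x ^ 2 * |dirDeriv e u x| ^ p ∂μ) := by
  have hp0 : 0 < p := by linarith
  have hu1 : ContDiffOn ℝ 1 u Ω := hu.of_le one_le_two
  have hlhs := integrable_sq_mul_of_tsupport_subset (μ := μ) hη.continuous hηc hΩ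
    (continuousOn_abs_dirDeriv_rpow (by linarith : 0 ≤ p + 2) hΩ hu1 e) hηΩ
  have hsecond := (integrable_sq_mul_of_tsupport_subset (μ := μ) hη.continuous hηc hΩ
    (continuousOn_sq_abs_dirDeriv_dirDeriv_mul_rpow (sub_nonneg.2 hp) hΩ hu e) hηΩ).const_mul
      (2 * (p + 1) ^ 2)
  have hfirst := (integrable_sq_mul_of_tsupport_subset (μ := μ) (continuous_dirDeriv e hη)
    (hηc.fderiv_apply ℝ e) hΩ (continuousOn_abs_dirDeriv_rpow hp0.le hΩ hu1 e)
      ((tsupport_dirDeriv_subset e η).trans hηΩ)).const_mul 8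
  have hbound := (hsecond.add hfirst).const_mul (M ^ 2)
  have hF := contDiff_interpolationFlux hp0 hΩ hu hη hηΩ e
  have hFc : HasCompactSupport (interpolationFlux η u p e) :=
    hηc.mono' ((subset_tsupport _).trans (tsupport_interpolationFlux_subset η u p e))
  have hdF := (integrable_dirDeriv (μ := μ) e hF hFc).const_mul 2
  refine (integral_mono hlhs (hdF.add hbound) fun x =>
    sq_mul_abs_dirDeriv_rpow_le_of_tsupport_subset hp0 hΩ hu hM
      (hη.differentiable one_ne_zero) hηΩ e x).trans_eq ?_
  rw [integral_add' hdF hbound, integral_const_mul, integral_dirDeriv_eq_zero e hF hFc, mul_zero,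
    zero_add, integral_const_mul]
  simp only [Pi.add_apply]
  rw [integral_add hsecond hfirst, integral_const_mul, integral_const_mul]

end WeightedEstimate

theorem integral_mul_le_mul_setIntegral {X : Type*} [MeasurableSpace X] {μ : Measure X}
    {s : Set X} {θ f : X → ℝ} {c : ℝ} (hs : MeasurableSet s) (hf : IntegrableOn f s μ)
    (hf0 : 0 ≤ f) (hθ0 : 0 ≤ θ) (hθc : ∀ x ∈ s, θ x ≤ c)
    (hθs : ∀ x ∉ s, θ x = 0) : ∫ x, θ x * f x ∂μ ≤ c * ∫ x in s, f x ∂μ := by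
  rw [← setIntegral_eq_integral_of_forall_compl_eq_zero fun x hx => by rw [hθs x hx, zero_mul],
    ← integral_const_mul]
  refine integral_mono_of_nonneg ?_ (hf.const_mul c) ?_ <;>
    filter_upwards [ae_restrict_mem hs] with x hx
  · exact mul_nonneg (hθ0 x) (hf0 x)
  · exact mul_le_mul_of_nonneg_right (hθc x hx) (hf0 x)

section Cutoff

variable {E : Type*} [NormedAddCommGroup E]

/-- A radial cutoff function, equal to `1` on `ball x₀ ρ` and vanishing outside `ball x₀ R`.
Interpolating in `‖x - x₀‖ ^ 2` rather than `‖x - x₀‖` makes it `C¹` at the centre as well. -/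
noncomputable def ballCutoff (x₀ : E) (ρ R : ℝ) (x : E) : ℝ :=
  quadraticTransition ((R ^ 2 - ‖x - x₀‖ ^ 2) / (R ^ 2 - ρ ^ 2))

namespace ballCutoff

variable {x₀ x : E} {ρ R : ℝ}

theorem nonneg (x₀ : E) (ρ R : ℝ) (x : E) : 0 ≤ ballCutoff x₀ ρ R x :=
  quadraticTransition.nonneg _

theorem le_one (x₀ : E) (ρ R : ℝ) (x : E) : ballCutoff x₀ ρ R x ≤ 1 :=
  quadraticTransition.le_one _

theorem eq_one (hρ : 0 ≤ ρ) (hR : ρ < R) (hx : x ∈ ball x₀ ρ) : ballCutoff x₀ ρ R x = 1 := by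
  rw [mem_ball_iff_norm] at hx
  refine quadraticTransition.eq_one ((one_le_div (by nlinarith)).2 ?_)
  gcongr

theorem eq_zero (hρ : 0 ≤ ρ) (hR : ρ < R) (hx : x ∉ ball x₀ R) : ballCutoff x₀ ρ R x = 0 := by
  rw [mem_ball_iff_norm, not_lt] at hx
  exact quadraticTransition.eq_zero
    (div_nonpos_of_nonpos_of_nonneg (by nlinarith) (by nlinarith))

theorem tsupport_subset (hρ : 0 ≤ ρ) (hR : ρ < R) :
    tsupport (ballCutoff x₀ ρ R) ⊆ closedBall x₀ R :=
  closure_minimal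
    (fun _ hx => by_contra fun h => hx (eq_zero hρ hR fun hb => h (ball_subset_closedBall hb)))
    isClosed_closedBall

section Integral

variable [MeasurableSpace E] [BorelSpace E] {μ : Measure E} {f : E → ℝ}

theorem integral_sq_mul_le (hρ : 0 ≤ ρ) (hR : ρ < R) (hf : IntegrableOn f (ball x₀ R) μ)
    (hf0 : 0 ≤ f) :
    ∫ x, ballCutoff x₀ ρ R x ^ 2 * f x ∂μ ≤ ∫ x in ball x₀ R, f x ∂μ := by
  simpa using integral_mul_le_mul_setIntegral measurableSet_ball hf hf0
    (fun _ => sq_nonneg _)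
    (fun x _ => pow_le_one₀ (n := 2) (nonneg x₀ ρ R x) (le_one x₀ ρ R x))
    (fun _ hx => by simp [eq_zero hρ hR hx])

theorem setIntegral_le_integral_sq_mul (hρ : 0 ≤ ρ) (hR : ρ < R)
    (hf : Integrable (fun x => ballCutoff x₀ ρ R x ^ 2 * f x) μ) (hf0 : 0 ≤ f) :
    ∫ x in ball x₀ ρ, f x ∂μ ≤ ∫ x, ballCutoff x₀ ρ R x ^ 2 * f x ∂μ :=
  calc ∫ x in ball x₀ ρ, f x ∂μ
      = ∫ x in ball x₀ ρ, ballCutoff x₀ ρ R x ^ 2 * f x ∂μ :=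
        setIntegral_congr_fun measurableSet_ball fun x hx => by simp [eq_one hρ hR hx]
    _ ≤ ∫ x, ballCutoff x₀ ρ R x ^ 2 * f x ∂μ :=
        setIntegral_le_integral hf (.of_forall fun x => mul_nonneg (sq_nonneg _) (hf0 x))

end Integral

variable [InnerProductSpace ℝ E]

theorem contDiff (x₀ : E) (ρ R : ℝ) : ContDiff ℝ 1 (ballCutoff x₀ ρ R) :=
  quadraticTransition.contDiff.comp <|
    (contDiff_const.sub ((contDiff_id.sub contDiff_const).norm_sq ℝ)).div_const _

theorem hasFDerivAt (x₀ : E) (ρ R : ℝ) (x : E) :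
    HasFDerivAt (ballCutoff x₀ ρ R)
      ((deriv quadraticTransition ((R ^ 2 - ‖x - x₀‖ ^ 2) / (R ^ 2 - ρ ^ 2)) *
        -(2 / (R ^ 2 - ρ ^ 2))) • innerSL ℝ (x - x₀)) x := by
  have hinner := ((((hasFDerivAt_id x).sub_const x₀).norm_sq).const_sub (R ^ 2)).mul_const
    (R ^ 2 - ρ ^ 2)⁻¹
  have houter := (quadraticTransition.hasDerivAt
    ((R ^ 2 - ‖x - x₀‖ ^ 2) * (R ^ 2 - ρ ^ 2)⁻¹)).differentiableAt.hasDerivAt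
  refine (houter.comp_hasFDerivAt x hinner).congr_fderiv ?_
  ext y
  simp only [id_eq, map_sub, ContinuousLinearMap.comp_id, smul_neg, neg_apply, smul_apply,
    sub_apply, coe_innerSL_apply, nsmul_eq_mul, Nat.cast_ofNat, smul_eq_mul, div_eq_mul_inv,
    mul_neg, neg_smul]
  ring

theorem norm_fderiv_le (hρ : 0 ≤ ρ) (hR : ρ < R) (hx : x ∈ closedBall x₀ R) :
    ‖fderiv ℝ (ballCutoff x₀ ρ R) x‖ ≤ 4 / (R - ρ) := by
  have hd : 0 < R - ρ := sub_pos.2 hR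
  have hsq : 0 < R ^ 2 - ρ ^ 2 := by nlinarith
  rw [(hasFDerivAt x₀ ρ R x).fderiv, norm_smul, norm_mul, norm_neg, innerSL_apply_norm,
    Real.norm_of_nonneg (by positivity : 0 ≤ 2 / (R ^ 2 - ρ ^ 2))]
  calc ‖deriv quadraticTransition ((R ^ 2 - ‖x - x₀‖ ^ 2) / (R ^ 2 - ρ ^ 2))‖ *
        (2 / (R ^ 2 - ρ ^ 2)) * ‖x - x₀‖
      ≤ 2 * (2 / (R ^ 2 - ρ ^ 2)) * (R + ρ) := by
        gcongr
        · exact quadraticTransition.abs_deriv_le _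
        · linarith [mem_closedBall_iff_norm.1 hx]
    _ = 4 / (R - ρ) := by
        have : R ^ 2 - ρ ^ 2 = (R + ρ) * (R - ρ) := by ring
        have : R + ρ ≠ 0 := by linarith
        field_simp
        ring

theorem fderiv_eq_zero (hρ : 0 ≤ ρ) (hR : ρ < R) (hx : x ∉ ball x₀ R) :
    fderiv ℝ (ballCutoff x₀ ρ R) x = 0 :=
  IsLocalMin.fderiv_eq_zero <| .of_forall fun y => by
    rw [eq_zero hρ hR hx]
    exact nonneg ..

theorem dirDeriv_sq_le (hρ : 0 ≤ ρ) (hR : ρ < R) (hx : x ∈ closedBall x₀ R) (e : E) :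
    dirDeriv e (ballCutoff x₀ ρ R) x ^ 2 ≤ 16 * (‖e‖ / (R - ρ)) ^ 2 := by
  have habs : |dirDeriv e (ballCutoff x₀ ρ R) x| ≤ 4 / (R - ρ) * ‖e‖ :=
    ((fderiv ℝ (ballCutoff x₀ ρ R) x).le_opNorm e).trans
      (mul_le_mul_of_nonneg_right (norm_fderiv_le hρ hR hx) (norm_nonneg e))
  calc dirDeriv e (ballCutoff x₀ ρ R) x ^ 2
      ≤ (4 / (R - ρ) * ‖e‖) ^ 2 := sq_le_sq.2 (habs.trans (le_abs_self _))
    _ = 16 * (‖e‖ / (R - ρ)) ^ 2 := by ring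

section Integral

variable [MeasurableSpace E] [BorelSpace E] {μ : Measure E} {f : E → ℝ}

theorem integral_dirDeriv_sq_mul_le (hρ : 0 ≤ ρ) (hR : ρ < R)
    (hf : IntegrableOn f (ball x₀ R) μ) (hf0 : 0 ≤ f) (e : E) :
    ∫ x, dirDeriv e (ballCutoff x₀ ρ R) x ^ 2 * f x ∂μ ≤
      16 * (‖e‖ / (R - ρ)) ^ 2 * ∫ x in ball x₀ R, f x ∂μ :=
  integral_mul_le_mul_setIntegral measurableSet_ball hf hf0 (fun _ => sq_nonneg _)
    (fun _ hx => dirDeriv_sq_le hρ hR (ball_subset_closedBall hx) e)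
    (fun _ hx => by simp [dirDeriv, fderiv_eq_zero hρ hR hx])

end Integral

end ballCutoff

end Cutoff

theorem caccioppoli_interpolation_general {E : Type*} [NormedAddCommGroup E]
    [InnerProductSpace ℝ E] [FiniteDimensional ℝ E] [MeasurableSpace E] [BorelSpace E]
    (μ : Measure E) [μ.IsAddHaarMeasure] {p : ℝ} (hp : 2 ≤ p) {Ω : Set E} (hΩ : IsOpen Ω)
    {u : E → ℝ} (hu : ContDiffOn ℝ 2 u Ω) {M : ℝ} (hM : ∀ x ∈ Ω, |u x| ≤ M) (e : E) {x₀ : E}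
    {ρ R : ℝ} (hρ : 0 ≤ ρ) (hR : ρ < R) (hRΩ : closedBall x₀ R ⊆ Ω) :
    ∫ x in ball x₀ ρ, |dirDeriv e u x| ^ (p + 2) ∂μ ≤
      (2 * (p + 1) ^ 2 + 128) * M ^ 2 *
        ((∫ x in ball x₀ R, |dirDeriv e (dirDeriv e u) x| ^ 2 * |dirDeriv e u x| ^ (p - 2) ∂μ) +
          (‖e‖ / (R - ρ)) ^ 2 * ∫ x in ball x₀ R, |dirDeriv e u x| ^ p ∂μ) := by
  have hη := ballCutoff.contDiff x₀ ρ R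
  have hsupp : tsupport (ballCutoff x₀ ρ R) ⊆ closedBall x₀ R := ballCutoff.tsupport_subset hρ hR
  have hηc : HasCompactSupport (ballCutoff x₀ ρ R) :=
    (isCompact_closedBall x₀ R).of_isClosed_subset (isClosed_tsupport _) hsupp
  have hu1 : ContDiffOn ℝ 1 u Ω := hu.of_le one_le_two
  have hint {f : E → ℝ} (hf : ContinuousOn f Ω) : IntegrableOn f (ball x₀ R) μ :=
    ((hf.mono hRΩ).integrableOn_compact (isCompact_closedBall x₀ R)).mono_set
      ball_subset_closedBall
  set I := ∫ x in ball x₀ R, |dirDeriv e (dirDeriv e u) x| ^ 2 * |dirDeriv e u x| ^ (p - 2) ∂μ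
  set J := ∫ x in ball x₀ R, |dirDeriv e u x| ^ p ∂μ
  have hI : 0 ≤ I := integral_nonneg fun x => by positivity
  have hJ : 0 ≤ J := integral_nonneg fun x => by positivity
  calc ∫ x in ball x₀ ρ, |dirDeriv e u x| ^ (p + 2) ∂μ
      ≤ ∫ x, ballCutoff x₀ ρ R x ^ 2 * |dirDeriv e u x| ^ (p + 2) ∂μ :=
        ballCutoff.setIntegral_le_integral_sq_mul hρ hR
          (integrable_sq_mul_of_tsupport_subset hη.continuous hηc hΩ
            (continuousOn_abs_dirDeriv_rpow (by linarith) hΩ hu1 e) (hsupp.trans hRΩ))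
          fun x => by positivity
    _ ≤ _ := integral_sq_mul_abs_dirDeriv_rpow_le μ hp hΩ hu hM hη hηc (hsupp.trans hRΩ) e
    _ ≤ M ^ 2 * (2 * (p + 1) ^ 2 * I + 8 * (16 * (‖e‖ / (R - ρ)) ^ 2 * J)) := by
        gcongr
        · exact ballCutoff.integral_sq_mul_le hρ hR
            (hint (continuousOn_sq_abs_dirDeriv_dirDeriv_mul_rpow (sub_nonneg.2 hp) hΩ hu e))
            fun x => by positivity
        · exact ballCutoff.integral_dirDeriv_sq_mul_le hρ hR
            (hint (continuousOn_abs_dirDeriv_rpow (by linarith) hΩ hu1 e))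
            (fun x => by positivity) e
    _ ≤ (2 * (p + 1) ^ 2 + 128) * M ^ 2 * (I + (‖e‖ / (R - ρ)) ^ 2 * J) := by
        have hcrossI : 0 ≤ 128 * M ^ 2 * I := mul_nonneg (by positivity) hI
        have hcrossJ : 0 ≤ 2 * (p + 1) ^ 2 * M ^ 2 * (‖e‖ / (R - ρ)) ^ 2 * J :=
          mul_nonneg (by positivity) hJ
        linear_combination hcrossI + hcrossJ

/-- Interpolation estimate (Brasco et al., Prop. 4.3): for bounded `u ∈ C²(Ω)` and `p ≥ 2`,
`∫_{B_ρ} |u_{x_k}|^{p+2} ≤ C ‖u‖_∞² ( ∫_{B_R} |u_{x_k x_k}|² |u_{x_k}|^{p-2}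
+ (1/(R-ρ))^γ ∫_{B_R} |u_{x_k}|^p )` with `C = C(n,p)` and `γ = γ(p)`. -/
theorem caccioppoli_interpolation (n : ℕ) (p : ℝ) (hp : 2 ≤ p) :
    ∃ C > (0 : ℝ), ∃ γ > (0 : ℝ),
      ∀ Ω : Set (EuclideanSpace ℝ (Fin n)), IsOpen Ω →
      ∀ u : EuclideanSpace ℝ (Fin n) → ℝ, ContDiffOn ℝ 2 u Ω →
      ∀ Mu : ℝ, (∀ x ∈ Ω, |u x| ≤ Mu) →
      ∀ k : Fin n, ∀ (x₀ : EuclideanSpace ℝ (Fin n)) (ρ R : ℝ),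
        0 < ρ → ρ < R → closedBall x₀ R ⊆ Ω →
        ∫ x in ball x₀ ρ, |pderiv1 u k x| ^ (p + 2) ≤
          C * Mu ^ 2 *
            ((∫ x in ball x₀ R, |pderiv1 (pderiv1 u k) k x| ^ 2 * |pderiv1 u k x| ^ (p - 2))
              + (1 / (R - ρ)) ^ γ * ∫ x in ball x₀ R, |pderiv1 u k x| ^ p) := by
  refine ⟨2 * (p + 1) ^ 2 + 128, by positivity, 2, two_pos,
    fun Ω hΩ u hu Mu hMu k x₀ ρ R hρ hR hRΩ => ?_⟩
  simpa using! caccioppoli_interpolation_general volume hp hΩ hu hMu (EuclideanSpace.single k 1)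
    hρ.le hR hRΩ
end

section
/- (Sobolev–Troisi inequality, case p̄ < n.) Let E ⊂ ℝⁿ be a bounded open set, let p_i ≥ 1 for i = 1,…,n, set 1/p̄ = (1/n) Σ_{i=1}^n (1/p_i) and p̄* = n p̄/(n − p̄), and assume p̄ < n. Then there exists a constant γ > 0 depending only on n, p₁,…,pₙ such that for every u ∈ C_c^∞(E): ‖u‖_{L^{p̄*}(E)} ≤ γ Σ_{i=1}^n ‖∂_i u‖_{L^{p_i}(E)}. -/
open MeasureTheory

/-!
Put `aᵢ = 1 - 1 / pᵢ`. The fundamental theorem of calculus on the line through `x` in direction `i`,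
applied to `‖v‖ ^ (1 + q aᵢ)`, bounds `‖v x‖ ^ (1 + q aᵢ)` by a multiple of the integral of
`‖v‖ ^ (q aᵢ) ‖∂ᵢv‖` along that line. Multiplying over `i`, the scaling relation
`∑ 1 / pᵢ = 1 + n / q` makes the left side a power of `‖v x‖ ^ q`, and the Gagliardo
grid-lines inequality integrates the right side. By homogeneity one may assume `‖v‖_q = 1`; then
Hölder's inequality bounds `∫ ‖v‖ ^ (q aᵢ) ‖∂ᵢv‖` by `‖∂ᵢv‖_{pᵢ}`.
-/

section Exponents

variable {ι : Type*} [Fintype ι] {p : ι → ℝ}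

theorem nontrivial_of_sum_one_div_eq (hp : ∀ i, 1 ≤ p i) {q : ℝ} (hq : 0 < q)
    (hpq : ∑ i, 1 / p i = 1 + Fintype.card ι / q) : Nontrivial ι := by
  have hle : ∑ i, 1 / p i ≤ Fintype.card ι := by
    simpa using Finset.sum_le_card_nsmul Finset.univ (fun i => 1 / p i) 1 fun i _ =>
      div_le_one_of_le₀ (hp i) (zero_le_one.trans (hp i))
  have hcard : (0 : ℝ) < Fintype.card ι := by
    have : (0 : ℝ) ≤ Fintype.card ι / q := by positivity
    linarith
  have : (0 : ℝ) < Fintype.card ι / q := by positivity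
  rw [← Fintype.one_lt_card_iff_nontrivial]
  exact_mod_cast (by linarith : (1 : ℝ) < Fintype.card ι)

theorem sum_one_add_mul_one_sub_one_div {q : ℝ} (hq : q ≠ 0)
    (hpq : ∑ i, 1 / p i = 1 + Fintype.card ι / q) :
    ∑ i, (1 + q * (1 - 1 / p i)) = q * (Fintype.card ι - 1) := by
  simp only [Finset.sum_add_distrib, ← Finset.mul_sum, Finset.sum_sub_distrib, hpq,
    Finset.sum_const, Finset.card_univ, nsmul_eq_mul]
  field_simp
  ring

theorem harmonicMean_pos [Nonempty ι] (hp : ∀ i, 0 < p i) {n pbar : ℝ} (hn : 0 < n)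
    (hpbar : 1 / pbar = (1 / n) * ∑ i, 1 / p i) : 0 < pbar := by
  have : 0 < ∑ i, 1 / p i :=
    Finset.sum_pos (fun i _ => one_div_pos.2 (hp i)) Finset.univ_nonempty
  rw [← one_div_pos, hpbar]
  positivity

theorem sobolevExponent_pos {n pbar pstar : ℝ} (hpbar₀ : 0 < pbar) (hpn : pbar < n)
    (hpstar : pstar = n * pbar / (n - pbar)) : 0 < pstar :=
  hpstar ▸ div_pos (mul_pos (hpbar₀.trans hpn) hpbar₀) (sub_pos.2 hpn)

theorem sum_one_div_eq_one_add_div_sobolevExponent {n pbar pstar : ℝ} (hpbar₀ : 0 < pbar)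
    (hpn : pbar < n) (hpbar : 1 / pbar = (1 / n) * ∑ i, 1 / p i)
    (hpstar : pstar = n * pbar / (n - pbar)) : ∑ i, 1 / p i = 1 + n / pstar := by
  have : 0 < n := hpbar₀.trans hpn
  have : n - pbar ≠ 0 := (sub_pos.2 hpn).ne'
  calc ∑ i, 1 / p i = n / pbar := by
        rw [div_eq_mul_one_div, hpbar]
        field_simp
    _ = 1 + n / pstar := by
        rw [hpstar]
        field_simp
        ring

end Exponents

section Inequality

open Function
open scoped ENNReal

theorem ennreal_prod_rpow_eq_rpow_sum {ι : Type*} (s : Finset ι) (c : ℝ≥0∞) {b : ι → ℝ}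
    (hb : ∀ i, 0 ≤ b i) : ∏ i ∈ s, c ^ b i = c ^ ∑ i ∈ s, b i := by
  classical
  induction s using Finset.induction_on with
  | empty => simp
  | insert i s hi ih =>
    rw [Finset.prod_insert hi, Finset.sum_insert hi, ih,
      ENNReal.rpow_add_of_nonneg _ _ (hb i) (Finset.sum_nonneg fun i _ => hb i)]

theorem lintegral_rpow_mul_le_of_lintegral_rpow_le_one {α : Type*} [MeasurableSpace α]
    {μ : Measure α} {f g : α → ℝ≥0∞} (hf : AEMeasurable f μ) (hg : AEMeasurable g μ) {p q : ℝ}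
    (hp : 1 ≤ p) (hf₁ : ∫⁻ x, f x ^ q ∂μ ≤ 1) :
    ∫⁻ x, f x ^ (q * (1 - 1 / p)) * g x ∂μ ≤ (∫⁻ x, g x ^ p ∂μ) ^ (1 / p) := by
  have hp₀ : 0 < p := zero_lt_one.trans_le hp
  have ha : 0 ≤ 1 - 1 / p := sub_nonneg.2 (div_le_one_of_le₀ hp hp₀.le)
  calc ∫⁻ x, f x ^ (q * (1 - 1 / p)) * g x ∂μ
      = ∫⁻ x, (f x ^ q) ^ (1 - 1 / p) * (g x ^ p) ^ (1 / p) ∂μ := by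
        simp only [← ENNReal.rpow_mul, mul_one_div_cancel hp₀.ne', ENNReal.rpow_one]
    _ ≤ (∫⁻ x, f x ^ q ∂μ) ^ (1 - 1 / p) * (∫⁻ x, g x ^ p ∂μ) ^ (1 / p) :=
        ENNReal.lintegral_mul_norm_pow_le (hf.pow_const q) (hg.pow_const p) ha
          (one_div_nonneg.2 hp₀.le) (sub_add_cancel _ _)
    _ ≤ (∫⁻ x, g x ^ p ∂μ) ^ (1 / p) := mul_le_of_le_one_left' (ENNReal.rpow_le_one hf₁ ha)

theorem eLpNorm'_ne_top_of_hasCompactSupport {X F : Type*} [TopologicalSpace X] [MeasurableSpace X]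
    [OpensMeasurableSpace X] [NormedAddCommGroup F] {μ : Measure X} [IsFiniteMeasureOnCompacts μ]
    {g : X → F} (hg : Continuous g) (hc : HasCompactSupport g) {s : ℝ} (hs : 0 < s) :
    eLpNorm' g s μ ≠ ∞ := by
  have h := (hg.memLp_of_hasCompactSupport (μ := μ) (p := ENNReal.ofReal s) hc).eLpNorm_ne_top
  rwa [eLpNorm_eq_eLpNorm' (by simpa using hs) ENNReal.ofReal_ne_top,
    ENNReal.toReal_ofReal hs.le] at h

theorem toReal_eLpNorm'_eq_integral {α F : Type*} [MeasurableSpace α] [NormedAddCommGroup F]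
    {μ : Measure α} {g : α → F} (hg : AEStronglyMeasurable g μ) {s : ℝ} (hs : 0 ≤ s) :
    (eLpNorm' g s μ).toReal = (∫ x, ‖g x‖ ^ s ∂μ) ^ (1 / s) := by
  rw [integral_eq_lintegral_of_nonneg_ae (.of_forall fun _ => by positivity)
      (hg.norm.aemeasurable.pow_const s).aestronglyMeasurable,
    eLpNorm'_eq_lintegral_enorm, ← ENNReal.toReal_rpow]
  simp only [← ENNReal.ofReal_rpow_of_nonneg (norm_nonneg _) hs, ofReal_norm]

theorem toReal_eLpNorm'_comp_toLp_eq_setIntegral {ι F : Type*} [Fintype ι]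
    [NormedAddCommGroup F] {g : EuclideanSpace ℝ ι → F} (hg : Continuous g)
    {E : Set (EuclideanSpace ℝ ι)} (hE : tsupport g ⊆ E) {s : ℝ} (hs : 0 < s) :
    (eLpNorm' (fun x : ι → ℝ => g (WithLp.toLp 2 x)) s volume).toReal =
      (∫ x in E, ‖g x‖ ^ s) ^ (1 / s) := by
  have hzero (x : EuclideanSpace ℝ ι) (hx : x ∉ E) : ‖g x‖ ^ s = 0 := by
    rw [image_eq_zero_of_notMem_tsupport fun h => hx (hE h), norm_zero, Real.zero_rpow hs.ne']
  rw [toReal_eLpNorm'_eq_integral (by fun_prop) hs.le,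
    setIntegral_eq_integral_of_forall_compl_eq_zero hzero,
    (PiLp.volume_preserving_toLp ι).integral_comp
      (MeasurableEquiv.toLp 2 (ι → ℝ)).measurableEmbedding (fun x => ‖g x‖ ^ s)]

theorem continuous_fderiv_apply_const {X F : Type*} [NormedAddCommGroup X] [NormedSpace ℝ X]
    [NormedAddCommGroup F] [NormedSpace ℝ F] {g : X → F} (hg : ContDiff ℝ 1 g) (y : X) :
    Continuous fun x => fderiv ℝ g x y :=
  (hg.continuous_fderiv one_ne_zero).clm_apply continuous_const

theorem fderiv_comp_toLp_single {ι F : Type*} [Finite ι] [DecidableEq ι] [NormedAddCommGroup F]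
    [NormedSpace ℝ F] {g : EuclideanSpace ℝ ι → F} (hg : Differentiable ℝ g) (x : ι → ℝ) (i : ι) :
    fderiv ℝ (fun y : ι → ℝ => g (WithLp.toLp 2 y)) x (Pi.single i 1) =
      fderiv ℝ g (WithLp.toLp 2 x) (EuclideanSpace.single i 1) := by
  have := Fintype.ofFinite ι
  have hcomp := (hg _).hasFDerivAt.comp x (PiLp.hasFDerivAt_toLp 2 x)
  exact DFunLike.congr_fun hcomp.fderiv (Pi.single i 1)

section GagliardoDensity

variable {ι F : Type*} [Fintype ι] [DecidableEq ι] [NormedAddCommGroup F] [NormedSpace ℝ F]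

/-- The sum of the weighted partial derivatives `‖v‖ ^ bᵢ ‖∂ᵢv‖`, which controls `v` on lines in
every coordinate direction at once. It takes values in `ℝ≥0∞`, so that it can be integrated without
an integrability hypothesis. -/
noncomputable def gagliardoDensity (v : (ι → ℝ) → F) (b : ι → ℝ) (x : ι → ℝ) : ℝ≥0∞ :=
  ∑ i, ‖v x‖ₑ ^ b i * ‖fderiv ℝ v x (Pi.single i 1)‖ₑ

variable {v : (ι → ℝ) → F}

theorem measurable_rpow_mul_fderiv (hv : ContDiff ℝ 1 v) (b : ℝ) (i : ι) :
    Measurable fun x => ‖v x‖ₑ ^ b * ‖fderiv ℝ v x (Pi.single i 1)‖ₑ :=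
  (hv.continuous.enorm.measurable.pow_const _).mul
    (continuous_fderiv_apply_const hv _).enorm.measurable

theorem measurable_gagliardoDensity (hv : ContDiff ℝ 1 v) (b : ι → ℝ) :
    Measurable (gagliardoDensity v b) :=
  Finset.measurable_fun_sum _ fun i _ => measurable_rpow_mul_fderiv hv (b i) i

theorem lintegral_gagliardoDensity_le_sum_eLpNorm' {p : ι → ℝ} {q : ℝ}
    (hp : ∀ i, 1 ≤ p i) (hv : ContDiff ℝ 1 v) (hv₁ : ∫⁻ x, ‖v x‖ₑ ^ q ≤ 1) :
    ∫⁻ x, gagliardoDensity v (fun i => q * (1 - 1 / p i)) x ≤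
      ∑ i, eLpNorm' (fun x => fderiv ℝ v x (Pi.single i 1)) (p i) volume := by
  simp only [gagliardoDensity]
  rw [lintegral_finsetSum _ fun i _ => measurable_rpow_mul_fderiv hv _ i]
  gcongr with i
  exact lintegral_rpow_mul_le_of_lintegral_rpow_le_one hv.continuous.enorm.aemeasurable
    (continuous_fderiv_apply_const hv _).enorm.aemeasurable (hp i) hv₁

end GagliardoDensity

variable {F : Type*} [NormedAddCommGroup F] [InnerProductSpace ℝ F]

theorem enorm_deriv_norm_rpow_le {w : ℝ → F} (hw : Differentiable ℝ w) {b : ℝ} (hb : 0 < b)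
    (t : ℝ) :
    ‖deriv (fun t => ‖w t‖ ^ (1 + b)) t‖ₑ ≤
      ENNReal.ofReal (1 + b) * (‖w t‖ₑ ^ b * ‖deriv w t‖ₑ) := by
  have h := norm_fderiv_norm_rpow_le hw (x := t) (lt_add_of_pos_right 1 hb)
  rw [← norm_deriv_eq_norm_fderiv, ← norm_deriv_eq_norm_fderiv, add_sub_cancel_left, mul_assoc] at h
  simpa only [ENNReal.ofReal_mul (add_nonneg zero_le_one hb.le),
    ENNReal.ofReal_mul (Real.rpow_nonneg (norm_nonneg _) b),
    ← ENNReal.ofReal_rpow_of_nonneg (norm_nonneg _) hb.le, ofReal_norm]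
    using ENNReal.ofReal_le_ofReal h

theorem enorm_rpow_one_add_le_lintegral_deriv {w : ℝ → F} (hw : ContDiff ℝ 1 w)
    (hc : HasCompactSupport w) {b : ℝ} (hb : 0 ≤ b) (x : ℝ) :
    ‖w x‖ₑ ^ (1 + b) ≤ ENNReal.ofReal (1 + b) * ∫⁻ t, ‖w t‖ₑ ^ b * ‖deriv w t‖ₑ := by
  obtain rfl | hb := hb.eq_or_lt
  · simpa using (HasCompactSupport.enorm_le_lintegral_Ici_deriv hw hc x).trans
      (setLIntegral_le_lintegral _ _)
  have hcs : HasCompactSupport fun t => ‖w t‖ ^ (1 + b) :=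
    hc.comp_left (g := fun y => ‖y‖ ^ (1 + b)) (by simp [(by positivity : 1 + b ≠ 0)])
  calc ‖w x‖ₑ ^ (1 + b) = ‖‖w x‖ ^ (1 + b)‖ₑ := by
        rw [Real.enorm_rpow_of_nonneg (norm_nonneg _) (by positivity), enorm_norm]
    _ ≤ ∫⁻ t in Set.Iic x, ‖deriv (fun t => ‖w t‖ ^ (1 + b)) t‖ₑ :=
        HasCompactSupport.enorm_le_lintegral_Ici_deriv
          (hw.norm_rpow (lt_add_of_pos_right 1 hb)) hcs x
    _ ≤ ∫⁻ t, ‖deriv (fun t => ‖w t‖ ^ (1 + b)) t‖ₑ := setLIntegral_le_lintegral _ _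
    _ ≤ ∫⁻ t, ENNReal.ofReal (1 + b) * (‖w t‖ₑ ^ b * ‖deriv w t‖ₑ) :=
        lintegral_mono (enorm_deriv_norm_rpow_le (hw.differentiable one_ne_zero) hb)
    _ = ENNReal.ofReal (1 + b) * ∫⁻ t, ‖w t‖ₑ ^ b * ‖deriv w t‖ₑ :=
        lintegral_const_mul' _ _ ENNReal.ofReal_ne_top

variable {ι : Type*} [Fintype ι] [DecidableEq ι] {v : (ι → ℝ) → F}

theorem enorm_rpow_one_add_le_lintegral_fderiv_update (hv : ContDiff ℝ 1 v)
    (hc : HasCompactSupport v) {b : ℝ} (hb : 0 ≤ b) (x : ι → ℝ) (i : ι) :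
    ‖v x‖ₑ ^ (1 + b) ≤ ENNReal.ofReal (1 + b) *
      ∫⁻ t, ‖v (update x i t)‖ₑ ^ b * ‖fderiv ℝ v (update x i t) (Pi.single i 1)‖ₑ := by
  have hderiv (t : ℝ) :
      deriv (v ∘ update x i) t = fderiv ℝ v (update x i t) (Pi.single i 1) := by
    rw [fderiv_comp_deriv _ (hv.differentiable one_ne_zero).differentiableAt
      (hasDerivAt_update x i t).differentiableAt, deriv_update]
  simpa only [hderiv, comp_apply, update_eq_self] using
    enorm_rpow_one_add_le_lintegral_deriv (hv.comp (contDiff_update 1 x i))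
      (hc.comp_isClosedEmbedding (isClosedEmbedding_update x i)) hb (x i)

theorem enorm_rpow_one_add_le_lintegral_gagliardoDensity (hv : ContDiff ℝ 1 v)
    (hc : HasCompactSupport v) {b : ι → ℝ} {K : ℝ} {i : ι} (hb : 0 ≤ b i) (hbK : 1 + b i ≤ K)
    (x : ι → ℝ) :
    ‖v x‖ₑ ^ (1 + b i) ≤ ENNReal.ofReal K * ∫⁻ t, gagliardoDensity v b (update x i t) := by
  refine (enorm_rpow_one_add_le_lintegral_fderiv_update hv hc hb x i).trans ?_
  gcongr with t
  exact Finset.single_le_sum_of_canonicallyOrdered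
    (f := fun j => ‖v (update x i t)‖ₑ ^ b j * ‖fderiv ℝ v (update x i t) (Pi.single j 1)‖ₑ)
    (Finset.mem_univ i)

theorem enorm_rpow_le_prod_lintegral_gagliardoDensity [Nontrivial ι] (hv : ContDiff ℝ 1 v)
    (hc : HasCompactSupport v) {b : ι → ℝ} (hb : ∀ i, 0 ≤ b i) {q K : ℝ}
    (hbK : ∀ i, 1 + b i ≤ K) (hbq : ∑ i, (1 + b i) = q * (Fintype.card ι - 1)) (x : ι → ℝ) :
    ‖v x‖ₑ ^ q ≤ ∏ i, (ENNReal.ofReal K * ∫⁻ t, gagliardoDensity v b (update x i t)) ^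
      ((1 : ℝ) / (Fintype.card ι - 1)) := by
  have hn : (0 : ℝ) < Fintype.card ι - 1 := sub_pos.2 (by exact_mod_cast Fintype.one_lt_card)
  have hr : (0 : ℝ) ≤ 1 / (Fintype.card ι - 1) := one_div_nonneg.2 hn.le
  calc ‖v x‖ₑ ^ q = (‖v x‖ₑ ^ ∑ i, (1 + b i)) ^ ((1 : ℝ) / (Fintype.card ι - 1)) := by
        rw [hbq, ← ENNReal.rpow_mul, mul_assoc, mul_one_div_cancel hn.ne', mul_one]
    _ = ∏ i, (‖v x‖ₑ ^ (1 + b i)) ^ ((1 : ℝ) / (Fintype.card ι - 1)) := by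
        rw [← ennreal_prod_rpow_eq_rpow_sum _ _ fun i => add_nonneg zero_le_one (hb i),
          ENNReal.prod_rpow_of_nonneg hr]
    _ ≤ _ := by
        gcongr with i
        exact enorm_rpow_one_add_le_lintegral_gagliardoDensity hv hc (hb i) (hbK i) x

theorem lintegral_enorm_rpow_le_lintegral_gagliardoDensity [Nontrivial ι] (hv : ContDiff ℝ 1 v)
    (hc : HasCompactSupport v) {b : ι → ℝ} (hb : ∀ i, 0 ≤ b i) {q K : ℝ}
    (hbK : ∀ i, 1 + b i ≤ K) (hbq : ∑ i, (1 + b i) = q * (Fintype.card ι - 1)) :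
    ∫⁻ x, ‖v x‖ₑ ^ q ≤
      (ENNReal.ofReal K * ∫⁻ x, gagliardoDensity v b x) ^ Real.conjExponent (Fintype.card ι) := by
  have hconj : Real.HolderConjugate (Fintype.card ι) (Real.conjExponent (Fintype.card ι)) :=
    .conjExponent (by exact_mod_cast Fintype.one_lt_card)
  have hgrid := lintegral_prod_lintegral_pow_le (fun _ : ι => (volume : Measure ℝ)) hconj
    ((measurable_gagliardoDensity hv b).const_mul (ENNReal.ofReal K))
  simp only [lintegral_const_mul' _ _ ENNReal.ofReal_ne_top] at hgrid
  exact (lintegral_mono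
    (enorm_rpow_le_prod_lintegral_gagliardoDensity hv hc hb hbK hbq)).trans hgrid

variable {p : ι → ℝ} {q : ℝ}

theorem one_le_sum_eLpNorm'_fderiv_of_eLpNorm'_eq_one (hp : ∀ i, 1 ≤ p i) (hq : 0 < q)
    (hpq : ∑ i, 1 / p i = 1 + Fintype.card ι / q) (hv : ContDiff ℝ 1 v)
    (hc : HasCompactSupport v) (hv₁ : eLpNorm' v q volume = 1) :
    1 ≤ ENNReal.ofReal (1 + q) *
      ∑ i, eLpNorm' (fun x => fderiv ℝ v x (Pi.single i 1)) (p i) volume := by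
  have := nontrivial_of_sum_one_div_eq hp hq hpq
  have hint : ∫⁻ x, ‖v x‖ₑ ^ q = 1 := by
    rw [lintegral_rpow_enorm_eq_rpow_eLpNorm' hq, hv₁, ENNReal.one_rpow]
  have ha₀ (i : ι) : 0 ≤ 1 - 1 / p i :=
    sub_nonneg.2 (div_le_one_of_le₀ (hp i) (zero_le_one.trans (hp i)))
  have ha₁ (i : ι) : 1 - 1 / p i ≤ 1 :=
    sub_le_self 1 (one_div_nonneg.2 (zero_le_one.trans (hp i)))
  have hgagliardo := lintegral_enorm_rpow_le_lintegral_gagliardoDensity hv hc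
    (fun i => mul_nonneg hq.le (ha₀ i))
    (fun i => add_le_add_right (mul_le_of_le_one_right hq.le (ha₁ i)) 1)
    (sum_one_add_mul_one_sub_one_div hq.ne' hpq)
  have hconj : 0 < Real.conjExponent (Fintype.card ι) :=
    (Real.HolderConjugate.conjExponent (by exact_mod_cast Fintype.one_lt_card)).symm.pos
  rw [hint, ← ENNReal.one_rpow (Real.conjExponent (Fintype.card ι)),
    ENNReal.rpow_le_rpow_iff hconj] at hgagliardo
  exact hgagliardo.trans
    (mul_le_mul_right (lintegral_gagliardoDensity_le_sum_eLpNorm' hp hv hint.le) _)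

theorem eLpNorm'_le_sum_eLpNorm'_fderiv (hp : ∀ i, 1 ≤ p i) (hq : 0 < q)
    (hpq : ∑ i, 1 / p i = 1 + Fintype.card ι / q) (hv : ContDiff ℝ 1 v)
    (hc : HasCompactSupport v) :
    eLpNorm' v q volume ≤ ENNReal.ofReal (1 + q) *
      ∑ i, eLpNorm' (fun x => fderiv ℝ v x (Pi.single i 1)) (p i) volume := by
  set N := eLpNorm' v q volume
  obtain hN₀ | hN₀ := eq_or_ne N 0
  · simp [hN₀]
  have hN : N ≠ ∞ := eLpNorm'_ne_top_of_hasCompactSupport hv.continuous hc hq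
  let c : ℝ := N.toReal⁻¹
  have hcN : ‖c‖ₑ = N⁻¹ := by
    rw [enorm_inv (ENNReal.toReal_ne_zero.2 ⟨hN₀, hN⟩),
      Real.enorm_of_nonneg ENNReal.toReal_nonneg, ENNReal.ofReal_toReal hN]
  have hfderiv (i : ι) : eLpNorm' (fun x => fderiv ℝ (c • v) x (Pi.single i 1)) (p i) volume =
      N⁻¹ * eLpNorm' (fun x => fderiv ℝ v x (Pi.single i 1)) (p i) volume := by
    rw [← hcN, ← eLpNorm'_const_smul c (zero_lt_one.trans_le (hp i)), fderiv_const_smul_field]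
    rfl
  have hcv : eLpNorm' (c • v) q volume = 1 := by
    rw [eLpNorm'_const_smul c hq, hcN, ENNReal.inv_mul_cancel hN₀ hN]
  have hnormalized := one_le_sum_eLpNorm'_fderiv_of_eLpNorm'_eq_one hp hq hpq (hv.const_smul c)
    (hc.smul_left (f := fun _ => c)) hcv
  change 1 ≤ _ * ∑ i, eLpNorm' (fun x => fderiv ℝ (c • v) x (Pi.single i 1)) (p i) volume
    at hnormalized
  simp only [hfderiv, ← Finset.mul_sum] at hnormalized
  rwa [mul_left_comm, mul_comm, ← div_eq_mul_inv, ENNReal.le_div_iff_mul_le (.inl hN₀) (.inl hN),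
    one_mul] at hnormalized

theorem sobolev_troisi_subcritical_general {u : EuclideanSpace ℝ ι → F}
    {E : Set (EuclideanSpace ℝ ι)} (hp : ∀ i, 1 ≤ p i) (hq : 0 < q)
    (hpq : ∑ i, 1 / p i = 1 + Fintype.card ι / q) (hu : ContDiff ℝ 1 u)
    (hc : HasCompactSupport u) (hE : tsupport u ⊆ E) :
    (∫ x in E, ‖u x‖ ^ q) ^ (1 / q) ≤ (1 + q) *
      ∑ i, (∫ x in E, ‖fderiv ℝ u x (EuclideanSpace.single i 1)‖ ^ p i) ^ (1 / p i) := by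
  have hp₀ (i : ι) : 0 < p i := zero_lt_one.trans_le (hp i)
  let v (x : ι → ℝ) : F := u (WithLp.toLp 2 x)
  have hv : ContDiff ℝ 1 v := hu.comp PiLp.contDiff_toLp
  have hvc : HasCompactSupport v := hc.comp_homeomorph (PiLp.homeomorph 2 fun _ : ι => ℝ).symm
  have hfin (i : ι) : eLpNorm' (fun x => fderiv ℝ v x (Pi.single i 1)) (p i) volume ≠ ∞ :=
    eLpNorm'_ne_top_of_hasCompactSupport (continuous_fderiv_apply_const hv _)
      (hvc.fderiv_apply ℝ _) (hp₀ i)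
  have hfderiv (i : ι) :
      (eLpNorm' (fun x => fderiv ℝ v x (Pi.single i 1)) (p i) volume).toReal =
        (∫ x in E, ‖fderiv ℝ u x (EuclideanSpace.single i 1)‖ ^ p i) ^ (1 / p i) := by
    simp only [v, fderiv_comp_toLp_single (hu.differentiable one_ne_zero)]
    exact toReal_eLpNorm'_comp_toLp_eq_setIntegral (continuous_fderiv_apply_const hu _)
      ((tsupport_fderiv_apply_subset ℝ _).trans hE) (hp₀ i)
  rw [← toReal_eLpNorm'_comp_toLp_eq_setIntegral hu.continuous hE hq]
  simp only [← hfderiv]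
  rw [← ENNReal.toReal_sum fun i _ => hfin i,
    ← ENNReal.toReal_ofReal (add_nonneg zero_le_one hq.le), ← ENNReal.toReal_mul]
  exact ENNReal.toReal_mono
    (ENNReal.mul_ne_top ENNReal.ofReal_ne_top (ENNReal.sum_ne_top.2 fun i _ => hfin i))
    (eLpNorm'_le_sum_eLpNorm'_fderiv hp hq hpq hv hvc)

end Inequality

/-- Sobolev–Troisi inequality, case `p̄ < n`: for `u ∈ C_c^∞(E)`,
`‖u‖_{L^{p̄*}(E)} ≤ γ Σᵢ ‖∂ᵢu‖_{L^{pᵢ}(E)}` with `γ = γ(n, p₁, …, pₙ)`. -/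
theorem sobolev_troisi_subcritical (n : ℕ) (hn : 1 ≤ n) (p : Fin n → ℝ)
    (hp : ∀ i, 1 ≤ p i) (pbar pstar : ℝ)
    (hpbar : 1 / pbar = (1 / n) * ∑ i, 1 / p i)
    (hpstar : pstar = n * pbar / (n - pbar)) (hpn : pbar < n) :
    ∃ γ > (0 : ℝ),
      ∀ E : Set (EuclideanSpace ℝ (Fin n)), IsOpen E → Bornology.IsBounded E →
      ∀ u : EuclideanSpace ℝ (Fin n) → ℝ,
        ContDiff ℝ (⊤ : ℕ∞) u → HasCompactSupport u → tsupport u ⊆ E →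
        (∫ x in E, |u x| ^ pstar) ^ (1 / pstar) ≤
          γ * ∑ i, (∫ x in E, |fderiv ℝ u x (EuclideanSpace.single i 1)| ^ p i) ^ (1 / p i) := by
  have : NeZero n := ⟨Nat.one_le_iff_ne_zero.1 hn⟩
  have hpbar₀ := harmonicMean_pos (fun i => zero_lt_one.trans_le (hp i)) (by positivity) hpbar
  have hpstar₀ := sobolevExponent_pos hpbar₀ hpn hpstar
  have hscaling : ∑ i, 1 / p i = 1 + Fintype.card (Fin n) / pstar := by
    rw [Fintype.card_fin, sum_one_div_eq_one_add_div_sobolevExponent hpbar₀ hpn hpbar hpstar]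
  exact ⟨1 + pstar, by positivity, fun E _ _ u hu hc hE =>
    sobolev_troisi_subcritical_general hp hpstar₀ hscaling (hu.of_le (by simp)) hc hE⟩
end

section
/- (Sobolev–Troisi inequality, case p̄ > n.) Let E ⊂ ℝⁿ be a bounded open set, let p_i ≥ 1 for i = 1,…,n, set 1/p̄ = (1/n) Σ_{i=1}^n (1/p_i), and assume p̄ > n. Then there exists a constant γ₂ > 0 depending only on n, p₁,…,pₙ (and E) such that for every u ∈ C_c^∞(E): ‖u‖_{L^∞(E)} ≤ γ₂ [ Σ_{i=1}^n ‖∂_i u‖_{L^{p_i}(E)} + ‖u‖_{L^1(E)} ]. -/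
open MeasureTheory

/-!
Let `S = ∑ᵢ 1 / pᵢ < 1` and join `x` to the points `x + z`, with `z` in the unit cube, by the
curves `t ↦ x + (t ^ aᵢ zᵢ)ᵢ`. The fundamental theorem of calculus along these curves, averaged
over `z`, bounds `|u x|` by `‖u‖₁` plus the averages of `aᵢ t ^ (aᵢ - 1) |∂ᵢu|` over the dilated
cubes, integrated over `0 < t < 1`. By Hölder's inequality on the cube and the change of variables
`y = x + (t ^ aᵢ zᵢ)ᵢ`, of Jacobian `t ^ A` with `A = ∑ⱼ aⱼ`, the `i`-th average is at most
`aᵢ t ^ (aᵢ - 1 - A / pᵢ) ‖∂ᵢu‖_{pᵢ}`. This is integrable over `(0, 1)` as soon as `A / pᵢ < aᵢ`,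
and positive exponents `aᵢ` with this property exist because `S < 1`.
-/

open scoped ENNReal NNReal

lemma enorm_sub_le_lintegral_of_enorm_deriv_le {F : Type*} [NormedAddCommGroup F]
    [NormedSpace ℝ F] {f : ℝ → F} {B : ℝ → ℝ≥0∞} {a b : ℝ} (hab : a ≤ b)
    (hfc : ContinuousOn f (Set.Icc a b)) (hfd : DifferentiableOn ℝ f (Set.Ioo a b))
    (hB : AEMeasurable B (volume.restrict (Set.Ioo a b)))
    (hfB : ∀ t ∈ Set.Ioo a b, ‖deriv f t‖ₑ ≤ B t) :
    ‖f b - f a‖ₑ ≤ ∫⁻ t in Set.Ioo a b, B t := by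
  by_cases hfin : ∫⁻ t in Set.Ioo a b, B t = ∞
  · simp [hfin]
  have hB_lt_top : ∀ᵐ t, t ∈ Set.Ioo a b → B t < ∞ :=
    (ae_restrict_iff' measurableSet_Ioo).1 (ae_lt_top' hB hfin)
  have hBi : IntervalIntegrable (fun t => (B t).toReal) volume a b :=
    (intervalIntegrable_iff_integrableOn_Ioo_of_le hab).2
      (integrable_toReal_of_lintegral_ne_top hB hfin)
  have hnorm : ‖f b - f a‖ ≤ ∫ t in a..b, (B t).toReal := by
    refine norm_sub_le_integral_of_norm_deriv_le_of_le hab hfc hfd ?_ hBi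
    filter_upwards [hB_lt_top] with t hBt ht
    simpa using ENNReal.toReal_mono (hBt ht).ne (hfB t ht)
  rw [intervalIntegral.integral_of_le hab, integral_Ioc_eq_integral_Ioo,
    integral_toReal hB ((ae_restrict_iff' measurableSet_Ioo).2 hB_lt_top)] at hnorm
  rwa [← ofReal_norm, ENNReal.ofReal_le_iff_le_toReal hfin]

lemma lintegral_Ioo_rpow_sub_one {s : ℝ} (hs : 0 < s) :
    ∫⁻ t in Set.Ioo (0 : ℝ) 1, ENNReal.ofReal (t ^ (s - 1)) = ENNReal.ofReal (1 / s) := by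
  have hint : IntegrableOn (fun t : ℝ => t ^ (s - 1)) (Set.Ioo 0 1) :=
    (intervalIntegrable_iff_integrableOn_Ioo_of_le zero_le_one).1
      (intervalIntegral.intervalIntegrable_rpow' (by linarith))
  rw [← ofReal_integral_eq_lintegral_ofReal hint, ← integral_Ioc_eq_integral_Ioo,
    ← intervalIntegral.integral_of_le zero_le_one, integral_rpow (Or.inl (by linarith))]
  · simp [Real.zero_rpow hs.ne']
  · exact ae_restrict_of_forall_mem measurableSet_Ioo fun t ht => Real.rpow_nonneg ht.1.le _

lemma continuous_fderiv_apply_of_contDiff_one {E F : Type*} [NormedAddCommGroup E]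
    [NormedSpace ℝ E] [NormedAddCommGroup F] [NormedSpace ℝ F] {u : E → F} (hu : ContDiff ℝ 1 u)
    (w : E) : Continuous fun y => fderiv ℝ u y w :=
  (hu.continuous_fderiv one_ne_zero).clm_apply continuous_const

lemma eLpNorm_eq_ofReal_setIntegral_rpow_norm {X F : Type*} [MeasurableSpace X] {μ : Measure X}
    [NormedAddCommGroup F] {f : X → F} {p : ℝ} (hp : 0 < p) (hf : MemLp f (ENNReal.ofReal p) μ)
    {s : Set X} (hs : Function.support f ⊆ s) :
    eLpNorm f (ENNReal.ofReal p) μ = ENNReal.ofReal ((∫ y in s, ‖f y‖ ^ p ∂μ) ^ (1 / p)) := by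
  rw [hf.eLpNorm_eq_integral_rpow_norm (by simpa using hp) ENNReal.ofReal_ne_top,
    ENNReal.toReal_ofReal hp.le, one_div, setIntegral_eq_integral_of_forall_compl_eq_zero]
  intro y hy
  simp [Function.notMem_support.1 fun h => hy (hs h), Real.zero_rpow hp.ne']

lemma exists_pos_forall_sum_mul_lt {ι : Type*} [Fintype ι] {q : ι → ℝ} (hq : ∀ i, 0 ≤ q i)
    (hsum : ∑ i, q i < 1) :
    ∃ a : ι → ℝ, (∀ i, 0 < a i) ∧ ∀ i, (∑ j, a j) * q i < a i := by
  set δ := (1 - ∑ i, q i) / (Fintype.card ι + 1)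
  have hδ : 0 < δ := div_pos (sub_pos.2 hsum) (by positivity)
  have hδ_card : δ * (Fintype.card ι + 1) = 1 - ∑ i, q i := div_mul_cancel₀ _ (by positivity)
  have hA : ∑ i, (q i + δ) ≤ 1 := by
    rw [Finset.sum_add_distrib, Finset.sum_const, Finset.card_univ, nsmul_eq_mul]
    linarith
  refine ⟨fun i => q i + δ, fun i => add_pos_of_nonneg_of_pos (hq i) hδ, fun i => ?_⟩
  calc (∑ j, (q j + δ)) * q i ≤ q i := mul_le_of_le_one_left (hq i) hA
    _ < q i + δ := lt_add_of_pos_right _ hδ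

section Dilation

variable {ι : Type*}

/-- The anisotropic dilation `z ↦ (t ^ aᵢ zᵢ)ᵢ` of `ι → ℝ` with exponents `a` and parameter `t`.
It is meant for `t > 0`; for positive exponents it collapses to `0` at `t = 0`. -/
noncomputable def anisotropicDilation (a : ι → ℝ) (t : ℝ) (z : ι → ℝ) : ι → ℝ :=
  fun i => t ^ a i * z i

variable {a : ι → ℝ}

lemma anisotropicDilation_zero_left (ha : ∀ i, a i ≠ 0) (z : ι → ℝ) :
    anisotropicDilation a 0 z = 0 := by
  ext i
  simp [anisotropicDilation, Real.zero_rpow (ha i)]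

lemma anisotropicDilation_one_left (z : ι → ℝ) : anisotropicDilation a 1 z = z := by
  ext i
  simp [anisotropicDilation]

lemma continuous_anisotropicDilation_left (ha : ∀ i, 0 ≤ a i) (z : ι → ℝ) :
    Continuous fun t => anisotropicDilation a t z :=
  continuous_pi fun i => (Real.continuous_rpow_const (ha i)).mul_const (z i)

lemma measurable_uncurry_anisotropicDilation :
    Measurable fun q : (ι → ℝ) × ℝ => anisotropicDilation a q.2 q.1 :=
  measurable_pi_lambda _ fun i => by unfold anisotropicDilation; fun_prop

lemma measurable_anisotropicDilation (t : ℝ) : Measurable (anisotropicDilation a t) :=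
  measurable_uncurry_anisotropicDilation.comp measurable_prodMk_right

lemma hasDerivAt_anisotropicDilation {t : ℝ} (ht : t ≠ 0) (z : ι → ℝ) :
    HasDerivAt (fun s => anisotropicDilation a s z) (fun i => a i * t ^ (a i - 1) * z i) t :=
  hasDerivAt_pi.2 fun i => (Real.hasDerivAt_rpow_const (Or.inl ht)).mul_const (z i)

variable {F : Type*} [NormedAddCommGroup F]

lemma measurable_rpow_mul_enorm_comp_add_anisotropicDilation {g : (ι → ℝ) → F}
    (hg : StronglyMeasurable g) (b : ℝ) (x : ι → ℝ) :
    Measurable fun q : (ι → ℝ) × ℝ =>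
      ENNReal.ofReal (q.2 ^ b) * ‖g (x + anisotropicDilation a q.2 q.1)‖ₑ :=
  Measurable.mul (by fun_prop)
    (hg.enorm.comp (measurable_uncurry_anisotropicDilation.const_add x))

variable [Fintype ι]

lemma map_anisotropicDilation_volume {t : ℝ} (ht : 0 < t) :
    volume.map (anisotropicDilation a t) = ENNReal.ofReal (t ^ (-∑ i, a i)) • volume := by
  classical
  have hdet : (Matrix.diagonal fun i => t ^ a i).det = t ^ ∑ i, a i := by
    rw [Matrix.det_diagonal, ← Real.rpow_sum_of_pos ht]
  have hpos : 0 < t ^ ∑ i, a i := Real.rpow_pos_of_pos ht _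
  have hlin : ⇑(Matrix.toLin' (Matrix.diagonal fun i => t ^ a i)) = anisotropicDilation a t := by
    ext z i
    simp [anisotropicDilation, Matrix.mulVec_diagonal]
  have hmap := Real.smul_map_diagonal_volume_pi (D := fun i => t ^ a i) (hdet ▸ hpos.ne')
  rw [hdet, abs_of_pos hpos, hlin] at hmap
  conv_rhs => rw [← hmap]
  rw [smul_smul, ← ENNReal.ofReal_mul (Real.rpow_nonneg ht.le _), ← Real.rpow_add ht]
  simp

lemma eLpNorm_comp_add_anisotropicDilation {g : (ι → ℝ) → F} (hg : StronglyMeasurable g)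
    (p : ℝ≥0∞) (x : ι → ℝ) {t : ℝ} (ht : 0 < t) :
    eLpNorm (fun z => g (x + anisotropicDilation a t z)) p volume =
      ENNReal.ofReal (t ^ (-((∑ i, a i) * p⁻¹.toReal))) * eLpNorm g p volume := by
  have hpos : 0 < t ^ (-∑ i, a i) := Real.rpow_pos_of_pos ht _
  have hgx : StronglyMeasurable fun y => g (x + y) := hg.comp_measurable (measurable_const_add x)
  calc eLpNorm (fun z => g (x + anisotropicDilation a t z)) p volume
      = eLpNorm (fun y => g (x + y)) p (volume.map (anisotropicDilation a t)) :=
        (eLpNorm_map_measure hgx.aestronglyMeasurable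
          (measurable_anisotropicDilation t).aemeasurable).symm
    _ = ENNReal.ofReal (t ^ (-∑ i, a i)) ^ p⁻¹.toReal * eLpNorm (fun y => g (x + y)) p volume := by
        rw [map_anisotropicDilation_volume ht,
          eLpNorm_smul_measure_of_ne_zero (ENNReal.ofReal_pos.2 hpos).ne', one_div, smul_eq_mul]
    _ = ENNReal.ofReal (t ^ (-((∑ i, a i) * p⁻¹.toReal))) * eLpNorm g p volume := by
        rw [ENNReal.ofReal_rpow_of_pos hpos, ← Real.rpow_mul ht.le, neg_mul]
        congr 1
        exact eLpNorm_comp_measurePreserving hg.aestronglyMeasurable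
          (measurePreserving_add_left volume x)

lemma isProbabilityMeasure_restrict_Icc_zero_one :
    IsProbabilityMeasure (volume.restrict (Set.Icc (0 : ι → ℝ) 1)) :=
  ⟨by simp [Real.volume_Icc_pi]⟩

lemma lintegral_Icc_enorm_comp_add_anisotropicDilation_le {g : (ι → ℝ) → F}
    (hg : StronglyMeasurable g) {p : ℝ≥0∞} (hp : 1 ≤ p) (x : ι → ℝ) {t : ℝ} (ht : 0 < t) :
    ∫⁻ z in Set.Icc 0 1, ‖g (x + anisotropicDilation a t z)‖ₑ ≤
      ENNReal.ofReal (t ^ (-((∑ i, a i) * p⁻¹.toReal))) * eLpNorm g p volume := by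
  have := isProbabilityMeasure_restrict_Icc_zero_one (ι := ι)
  have hgt : StronglyMeasurable fun z => g (x + anisotropicDilation a t z) :=
    hg.comp_measurable ((measurable_anisotropicDilation t).const_add x)
  rw [← eLpNorm_one_eq_lintegral_enorm, ← eLpNorm_comp_add_anisotropicDilation hg p x ht]
  exact (eLpNorm_le_eLpNorm_of_exponent_le hp hgt.aestronglyMeasurable).trans
    (eLpNorm_restrict_le _ _ _ _)

lemma lintegral_Icc_lintegral_Ioo_anisotropicDilation_le {g : (ι → ℝ) → F}
    (hg : StronglyMeasurable g) {p : ℝ≥0∞} (hp : 1 ≤ p) {b : ℝ}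
    (hb : (∑ i, a i) * p⁻¹.toReal < b) (x : ι → ℝ) :
    ∫⁻ z in Set.Icc 0 1, ∫⁻ t in Set.Ioo (0 : ℝ) 1,
        ENNReal.ofReal (t ^ (b - 1)) * ‖g (x + anisotropicDilation a t z)‖ₑ ≤
      ENNReal.ofReal (1 / (b - (∑ i, a i) * p⁻¹.toReal)) * eLpNorm g p volume := by
  set c := (∑ i, a i) * p⁻¹.toReal
  calc
    _ = ∫⁻ t in Set.Ioo (0 : ℝ) 1, ENNReal.ofReal (t ^ (b - 1)) *
          ∫⁻ z in Set.Icc 0 1, ‖g (x + anisotropicDilation a t z)‖ₑ := by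
        rw [lintegral_lintegral_swap
          (measurable_rpow_mul_enorm_comp_add_anisotropicDilation hg (b - 1) x).aemeasurable]
        exact lintegral_congr fun t => lintegral_const_mul _
          (hg.enorm.comp ((measurable_anisotropicDilation t).const_add x))
    _ ≤ ∫⁻ t in Set.Ioo (0 : ℝ) 1, ENNReal.ofReal (t ^ (b - c - 1)) * eLpNorm g p volume := by
        refine setLIntegral_mono' measurableSet_Ioo fun t ht => ?_
        refine (mul_le_mul_right
          (lintegral_Icc_enorm_comp_add_anisotropicDilation_le hg hp x ht.1) _).trans_eq ?_
        rw [← mul_assoc, ← ENNReal.ofReal_mul (Real.rpow_nonneg ht.1.le _), ← Real.rpow_add ht.1]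
        congr 3
        ring
    _ = ENNReal.ofReal (1 / (b - c)) * eLpNorm g p volume := by
        rw [lintegral_mul_const _ (by fun_prop), lintegral_Ioo_rpow_sub_one (sub_pos.2 hb)]

end Dilation

section PiSpace

variable {ι F : Type*} [NormedAddCommGroup F] [NormedSpace ℝ F] {a : ι → ℝ} {u : (ι → ℝ) → F}

lemma hasDerivAt_comp_add_anisotropicDilation [Finite ι] (hu : Differentiable ℝ u)
    (x z : ι → ℝ) {t : ℝ} (ht : t ≠ 0) :
    HasDerivAt (fun s => u (x + anisotropicDilation a s z))
      (fderiv ℝ u (x + anisotropicDilation a t z) fun i => a i * t ^ (a i - 1) * z i) t := by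
  cases nonempty_fintype ι
  exact (hu _).hasFDerivAt.comp_hasDerivAt t ((hasDerivAt_anisotropicDilation ht z).const_add x)

variable [Fintype ι] [DecidableEq ι]

lemma enorm_apply_le_sum_enorm_mul_enorm_apply_single (L : (ι → ℝ) →L[ℝ] F) (w : ι → ℝ) :
    ‖L w‖ₑ ≤ ∑ i, ‖w i‖ₑ * ‖L (Pi.single i 1)‖ₑ := by
  conv_lhs => rw [pi_eq_sum_univ' w, map_sum]
  refine (enorm_sum_le _ _).trans_eq (Finset.sum_congr rfl fun i _ => ?_)
  rw [map_smul, enorm_smul]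

lemma enorm_deriv_comp_add_anisotropicDilation_le (ha : ∀ i, 0 ≤ a i) (hu : Differentiable ℝ u)
    (x : ι → ℝ) {z : ι → ℝ} (hz : ‖z‖ ≤ 1) {t : ℝ} (ht : 0 < t) :
    ‖deriv (fun s => u (x + anisotropicDilation a s z)) t‖ₑ ≤
      ∑ i, ENNReal.ofReal (a i) * (ENNReal.ofReal (t ^ (a i - 1)) *
        ‖fderiv ℝ u (x + anisotropicDilation a t z) (Pi.single i 1)‖ₑ) := by
  have hvelocity (i : ι) :
      ‖a i * t ^ (a i - 1) * z i‖ₑ ≤ ENNReal.ofReal (a i) * ENNReal.ofReal (t ^ (a i - 1)) := by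
    rw [enorm_mul, enorm_mul, Real.enorm_of_nonneg (ha i),
      Real.enorm_of_nonneg (Real.rpow_nonneg ht.le _), ← ofReal_norm (z i)]
    exact mul_le_of_le_one_right' (ENNReal.ofReal_le_one.2 ((norm_le_pi_norm z i).trans hz))
  rw [(hasDerivAt_comp_add_anisotropicDilation hu x z ht.ne').deriv]
  refine (enorm_apply_le_sum_enorm_mul_enorm_apply_single _ _).trans
    (Finset.sum_le_sum fun i _ => ?_)
  rw [← mul_assoc]
  gcongr
  exact hvelocity i

lemma enorm_le_enorm_add_sum_lintegral_anisotropicDilation (ha : ∀ i, 0 < a i)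
    (hu : ContDiff ℝ 1 u) (x : ι → ℝ) {z : ι → ℝ} (hz : ‖z‖ ≤ 1) :
    ‖u x‖ₑ ≤ ‖u (x + z)‖ₑ + ∑ i, ENNReal.ofReal (a i) * ∫⁻ t in Set.Ioo (0 : ℝ) 1,
      ENNReal.ofReal (t ^ (a i - 1)) *
        ‖fderiv ℝ u (x + anisotropicDilation a t z) (Pi.single i 1)‖ₑ := by
  have hcont : Continuous fun t => x + anisotropicDilation a t z :=
    continuous_const.add (continuous_anisotropicDilation_left (fun i => (ha i).le) z)
  have hmeas (i : ι) : Measurable fun t : ℝ => ENNReal.ofReal (t ^ (a i - 1)) *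
      ‖fderiv ℝ u (x + anisotropicDilation a t z) (Pi.single i 1)‖ₑ :=
    (measurable_rpow_mul_enorm_comp_add_anisotropicDilation
      (continuous_fderiv_apply_of_contDiff_one hu _).stronglyMeasurable _ x).comp
      measurable_prodMk_left
  have hdiff := hu.differentiable one_ne_zero
  have hftc := enorm_sub_le_lintegral_of_enorm_deriv_le zero_le_one
    (hu.continuous.comp hcont).continuousOn
    (fun t ht => (hasDerivAt_comp_add_anisotropicDilation hdiff x z
      ht.1.ne').differentiableAt.differentiableWithinAt)
    (Finset.measurable_fun_sum _ fun i _ => (hmeas i).const_mul _).aemeasurable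
    (fun t ht =>
      enorm_deriv_comp_add_anisotropicDilation_le (fun i => (ha i).le) hdiff x hz ht.1)
  rw [lintegral_finsetSum _ fun i _ => (hmeas i).const_mul _] at hftc
  simp only [Function.comp_apply, anisotropicDilation_one_left,
    anisotropicDilation_zero_left fun i => (ha i).ne', add_zero,
    lintegral_const_mul _ (hmeas _)] at hftc
  calc ‖u x‖ₑ = ‖u (x + z) - (u (x + z) - u x)‖ₑ := by rw [sub_sub_cancel]
    _ ≤ ‖u (x + z)‖ₑ + ‖u (x + z) - u x‖ₑ := enorm_sub_le
    _ ≤ _ := by gcongr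

lemma enorm_le_eLpNorm_one_add_sum_eLpNorm_fderiv (ha : ∀ i, 0 < a i) {p : ι → ℝ≥0∞}
    (hp : ∀ i, 1 ≤ p i) (hap : ∀ i, (∑ j, a j) * (p i)⁻¹.toReal < a i)
    (hu : ContDiff ℝ 1 u) (x : ι → ℝ) :
    ‖u x‖ₑ ≤ eLpNorm u 1 volume + ∑ i,
      ENNReal.ofReal (a i / (a i - (∑ j, a j) * (p i)⁻¹.toReal)) *
        eLpNorm (fun y => fderiv ℝ u y (Pi.single i 1)) (p i) volume := by
  have := isProbabilityMeasure_restrict_Icc_zero_one (ι := ι)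
  have hgrad (i : ι) :=
    (continuous_fderiv_apply_of_contDiff_one hu (Pi.single i 1)).stronglyMeasurable
  have hmeas (i : ι) : Measurable fun z => ∫⁻ t in Set.Ioo (0 : ℝ) 1,
      ENNReal.ofReal (t ^ (a i - 1)) *
        ‖fderiv ℝ u (x + anisotropicDilation a t z) (Pi.single i 1)‖ₑ :=
    (measurable_rpow_mul_enorm_comp_add_anisotropicDilation (hgrad i) _ x).lintegral_prod_right'
  have hnorm {z : ι → ℝ} (hz : z ∈ Set.Icc 0 1) : ‖z‖ ≤ 1 :=
    (pi_norm_le_iff_of_nonneg zero_le_one).2 fun i =>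
      (Real.norm_of_nonneg (hz.1 i)).trans_le (hz.2 i)
  calc ‖u x‖ₑ = ∫⁻ _ in Set.Icc (0 : ι → ℝ) 1, ‖u x‖ₑ := by simp
    _ ≤ ∫⁻ z in Set.Icc (0 : ι → ℝ) 1, (‖u (x + z)‖ₑ + ∑ i, ENNReal.ofReal (a i) *
          ∫⁻ t in Set.Ioo (0 : ℝ) 1, ENNReal.ofReal (t ^ (a i - 1)) *
            ‖fderiv ℝ u (x + anisotropicDilation a t z) (Pi.single i 1)‖ₑ) :=
        setLIntegral_mono' measurableSet_Icc fun z hz =>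
          enorm_le_enorm_add_sum_lintegral_anisotropicDilation ha hu x (hnorm hz)
    _ = (∫⁻ z in Set.Icc (0 : ι → ℝ) 1, ‖u (x + z)‖ₑ) + ∑ i, ENNReal.ofReal (a i) *
          ∫⁻ z in Set.Icc 0 1, ∫⁻ t in Set.Ioo (0 : ℝ) 1, ENNReal.ofReal (t ^ (a i - 1)) *
            ‖fderiv ℝ u (x + anisotropicDilation a t z) (Pi.single i 1)‖ₑ := by
        rw [lintegral_add_right _ (Finset.measurable_fun_sum _ fun i _ => (hmeas i).const_mul _),
          lintegral_finsetSum _ fun i _ => (hmeas i).const_mul _]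
        simp only [lintegral_const_mul _ (hmeas _)]
    _ ≤ _ := by
        refine add_le_add ?_ (Finset.sum_le_sum fun i _ => ?_)
        · rw [eLpNorm_one_eq_lintegral_enorm, ← lintegral_add_left_eq_self (fun y => ‖u y‖ₑ) x]
          exact setLIntegral_le_lintegral _ _
        · rw [div_eq_mul_one_div (a i), ENNReal.ofReal_mul (ha i).le, mul_assoc]
          refine mul_le_mul_right ?_ _
          exact lintegral_Icc_lintegral_Ioo_anisotropicDilation_le (hgrad i) (hp i) (hap i) x

end PiSpace

section EuclideanSpace

variable {ι F : Type*} [Fintype ι] [DecidableEq ι] [NormedAddCommGroup F] [NormedSpace ℝ F]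

lemma eLpNorm_fderiv_comp_toLp_apply_single {u : EuclideanSpace ℝ ι → F} (hu : ContDiff ℝ 1 u)
    (p : ℝ≥0∞) (i : ι) :
    eLpNorm (fun y => fderiv ℝ (fun z : ι → ℝ => u (WithLp.toLp 2 z)) y (Pi.single i 1)) p volume =
      eLpNorm (fun y => fderiv ℝ u y (EuclideanSpace.single i 1)) p volume := by
  rw [← eLpNorm_comp_measurePreserving
    (continuous_fderiv_apply_of_contDiff_one hu _).aestronglyMeasurable
    (PiLp.volume_preserving_toLp ι)]
  congr 1
  ext y
  exact DFunLike.congr_fun (PiLp.continuousLinearEquiv 2 ℝ fun _ : ι => ℝ).symm.comp_right_fderiv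
    (Pi.single i 1)

theorem exists_enorm_le_mul_sum_eLpNorm_fderiv_add_eLpNorm_one {p : ι → ℝ≥0∞}
    (hp : ∑ i, (p i)⁻¹ < 1) :
    ∃ C : ℝ≥0, 0 < C ∧ ∀ u : EuclideanSpace ℝ ι → F, ContDiff ℝ 1 u → ∀ x,
      ‖u x‖ₑ ≤ C * ((∑ i, eLpNorm (fun y => fderiv ℝ u y (EuclideanSpace.single i 1)) (p i) volume)
        + eLpNorm u 1 volume) := by
  have hp_inv (i : ι) : (p i)⁻¹ < 1 :=
    (Finset.single_le_sum_of_canonicallyOrdered (Finset.mem_univ i)).trans_lt hp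
  have hp_one (i : ι) : 1 ≤ p i := (ENNReal.inv_lt_one.1 (hp_inv i)).le
  have hsum : ∑ i, (p i)⁻¹.toReal < 1 := by
    rw [← ENNReal.toReal_sum fun i _ => (hp_inv i).ne_top]
    simpa using ENNReal.toReal_strict_mono ENNReal.one_ne_top hp
  obtain ⟨a, ha, hap⟩ := exists_pos_forall_sum_mul_lt (fun _ => ENNReal.toReal_nonneg) hsum
  set c : ι → ℝ≥0 := fun i => (a i / (a i - (∑ j, a j) * (p i)⁻¹.toReal)).toNNReal
  have hc_le (i : ι) : c i ≤ ∑ j, c j + 1 :=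
    (Finset.single_le_sum_of_canonicallyOrdered (Finset.mem_univ i)).trans le_self_add
  refine ⟨∑ i, c i + 1, by positivity, fun u hu x => ?_⟩
  have hu_pi : ContDiff ℝ 1 fun z : ι → ℝ => u (WithLp.toLp 2 z) :=
    hu.comp (PiLp.continuousLinearEquiv 2 ℝ fun _ : ι => ℝ).symm.contDiff
  calc ‖u x‖ₑ
      ≤ eLpNorm u 1 volume + ∑ i, c i *
          eLpNorm (fun y => fderiv ℝ u y (EuclideanSpace.single i 1)) (p i) volume := by
        rw [← eLpNorm_comp_measurePreserving hu.continuous.aestronglyMeasurable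
          (PiLp.volume_preserving_toLp ι)]
        simp only [← eLpNorm_fderiv_comp_toLp_apply_single hu]
        exact enorm_le_eLpNorm_one_add_sum_eLpNorm_fderiv ha hp_one hap hu_pi x.ofLp
    _ ≤ (∑ i, c i + 1 : ℝ≥0) * eLpNorm u 1 volume + ∑ i, (∑ j, c j + 1 : ℝ≥0) *
          eLpNorm (fun y => fderiv ℝ u y (EuclideanSpace.single i 1)) (p i) volume := by
        gcongr with i
        · exact le_mul_of_one_le_left' (mod_cast le_add_self)
        · exact hc_le i
    _ = _ := by rw [mul_add, add_comm, Finset.mul_sum]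

end EuclideanSpace

theorem sobolev_troisi_supercritical_general {ι F : Type*} [Fintype ι] [DecidableEq ι]
    [NormedAddCommGroup F] [NormedSpace ℝ F] {p : ι → ℝ} (hp : ∀ i, 0 < p i)
    (hp_sum : ∑ i, 1 / p i < 1) :
    ∃ γ > (0 : ℝ), ∀ (E : Set (EuclideanSpace ℝ ι)) (u : EuclideanSpace ℝ ι → F),
      ContDiff ℝ 1 u → HasCompactSupport u → tsupport u ⊆ E → ∀ x,
        ‖u x‖ ≤ γ * ((∑ i, (∫ y in E, ‖fderiv ℝ u y (EuclideanSpace.single i 1)‖ ^ p i) ^ (1 / p i))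
          + ∫ y in E, ‖u y‖) := by
  have hsum : ∑ i, (ENNReal.ofReal (p i))⁻¹ < 1 := by
    simp only [← ENNReal.ofReal_inv_of_pos (hp _), ← one_div]
    rwa [← ENNReal.ofReal_sum_of_nonneg fun i _ => one_div_nonneg.2 (hp i).le,
      ENNReal.ofReal_lt_one]
  obtain ⟨C, hC, hbound⟩ :=
    exists_enorm_le_mul_sum_eLpNorm_fderiv_add_eLpNorm_one (F := F) hsum
  refine ⟨C, hC, fun E u hu hcu hE x => ?_⟩
  have hu_norm : eLpNorm u 1 volume = ENNReal.ofReal (∫ y in E, ‖u y‖) := by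
    simpa using eLpNorm_eq_ofReal_setIntegral_rpow_norm one_pos
      (hu.continuous.memLp_of_hasCompactSupport hcu) ((subset_tsupport u).trans hE)
  have hgrad_norm (i : ι) := eLpNorm_eq_ofReal_setIntegral_rpow_norm (μ := volume) (hp i)
    ((continuous_fderiv_apply_of_contDiff_one hu _).memLp_of_hasCompactSupport
      (hcu.fderiv_apply ℝ (EuclideanSpace.single i 1)))
    (((subset_tsupport _).trans (tsupport_fderiv_apply_subset ℝ _)).trans hE)
  have hgrad_nonneg (i : ι) :
      0 ≤ (∫ y in E, ‖fderiv ℝ u y (EuclideanSpace.single i 1)‖ ^ p i) ^ (1 / p i) := by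
    positivity
  have hx := hbound u hu x
  simp only [hgrad_norm, hu_norm] at hx
  rwa [← ENNReal.ofReal_sum_of_nonneg fun i _ => hgrad_nonneg i,
    ← ENNReal.ofReal_add (Finset.sum_nonneg fun i _ => hgrad_nonneg i) (by positivity),
    ← ENNReal.ofReal_coe_nnreal, ← ENNReal.ofReal_mul C.coe_nonneg, ← ofReal_norm,
    ENNReal.ofReal_le_ofReal_iff (by positivity)] at hx

lemma sum_one_div_lt_one_of_lt_harmonicMean {n : ℕ} {p : Fin n → ℝ} {pbar : ℝ}
    (hpbar : 1 / pbar = (1 / n) * ∑ i, 1 / p i) (hpn : (n : ℝ) < pbar) : ∑ i, 1 / p i < 1 := by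
  rcases n.eq_zero_or_pos with rfl | hn
  · simp
  have hn' : (0 : ℝ) < n := Nat.cast_pos.2 hn
  calc ∑ i, 1 / p i = n * (1 / pbar) := by rw [hpbar]; field_simp
    _ < 1 := by rwa [mul_one_div, div_lt_one (hn'.trans hpn)]

/-- Sobolev–Troisi inequality, case `p̄ > n`: for `u ∈ C_c^∞(E)`,
`‖u‖_{L^∞(E)} ≤ γ₂ [ Σᵢ ‖∂ᵢu‖_{L^{pᵢ}(E)} + ‖u‖_{L¹(E)} ]`. -/
theorem sobolev_troisi_supercritical (n : ℕ) (hn : 1 ≤ n) (p : Fin n → ℝ)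
    (hp : ∀ i, 1 ≤ p i) (pbar : ℝ)
    (hpbar : 1 / pbar = (1 / n) * ∑ i, 1 / p i) (hpn : (n : ℝ) < pbar)
    (E : Set (EuclideanSpace ℝ (Fin n))) (hEo : IsOpen E) (hEb : Bornology.IsBounded E) :
    ∃ γ₂ > (0 : ℝ),
      ∀ u : EuclideanSpace ℝ (Fin n) → ℝ,
        ContDiff ℝ (⊤ : ℕ∞) u → HasCompactSupport u → tsupport u ⊆ E →
        ∀ x ∈ E, |u x| ≤
          γ₂ * ((∑ i, (∫ y in E, |fderiv ℝ u y (EuclideanSpace.single i 1)| ^ p i) ^ (1 / p i))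
            + ∫ y in E, |u y|) := by
  obtain ⟨γ, hγ, hbound⟩ := sobolev_troisi_supercritical_general (F := ℝ)
    (fun i => one_pos.trans_le (hp i)) (sum_one_div_lt_one_of_lt_harmonicMean hpbar hpn)
  exact ⟨γ, hγ, fun u hu hcu hsu x _ => hbound E u (hu.of_le (mod_cast le_top)) hcu hsu x⟩
end

section
/- Let m ≥ 1 and 1 < p < ∞. There exist constants c₁ = c₁(m,p) > 0 and c₂ = c₂(m,p) > 0 such that for every μ ≥ 0 and all ξ, η ∈ ℝ^m with ξ ≠ η: c₁ (μ² + |ξ|² + |η|²)^{(p−2)/2} ≤ |V_p(ξ) − V_p(η)|² / |ξ − η|² ≤ c₂ (μ² + |ξ|² + |η|²)^{(p−2)/2}, where V_p(ξ) := (μ² + |ξ|²)^{(p−2)/4} ξ. -/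
/-!
Put `r = (p - 2) / 2 > -1` and `⟨ξ⟩ = √(μ² + |ξ|²)`, so that `V_p ξ = ⟨ξ⟩ ^ r ξ`. Bernoulli's
inequality with exponent `r + 1` gives `|x ^ r - y ^ r| y ≤ |r| x ^ r (x - y)` for `0 ≤ y ≤ x`, and
since `s ↦ √(μ² + s²)` is 1-Lipschitz this yields, for `|η| ≤ |ξ|`,
`|⟨ξ⟩ ^ r - ⟨η⟩ ^ r| |η| ≤ |r| ⟨ξ⟩ ^ r |ξ - η|`. In the splitting
`V_p ξ - V_p η = ⟨ξ⟩ ^ r (ξ - η) + (⟨ξ⟩ ^ r - ⟨η⟩ ^ r) η` the second term is therefore at most `|r|`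
times the first. This proves the upper bound, and the lower one for `p < 2`, where `|r| < 1`. For
`p ≥ 2` the weight is increasing, and the second term is at most
`⟨ξ⟩ ^ r |ξ| - ⟨η⟩ ^ r |η| ≤ |V_p ξ - V_p η|`. Finally `⟨ξ⟩²` and `μ² + |ξ|² + |η|²` agree up to a
factor `2`. Only the triangle inequality is used, so the estimate holds in every normed space.
-/

lemma abs_rpow_sub_rpow_mul_le {r x y : ℝ} (hr : -1 ≤ r) (hy : 0 ≤ y) (hyx : y ≤ x) :
    |x ^ r - y ^ r| * y ≤ |r| * x ^ r * (x - y) := by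
  rcases hy.eq_or_lt with rfl | hy
  · simpa using by positivity
  have hx : 0 < x := hy.trans_le hyx
  have hypow : y ^ r * y = x ^ r * x * (y / x) ^ (r + 1) := by
    rw [← Real.rpow_add_one hy.ne', ← Real.rpow_add_one hx.ne',
      ← Real.mul_rpow hx.le (by positivity), mul_div_cancel₀ _ hx.ne']
  have htangent : x ^ r * x * (1 + (r + 1) * (y / x - 1)) = x ^ r * (y - r * (x - y)) := by
    field_simp
    ring
  have hu : -1 ≤ y / x - 1 := by linarith [div_pos hy hx]
  rcases le_total 0 r with h | h
  · have hmono : y ^ r ≤ x ^ r := Real.rpow_le_rpow hy.le hyx h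
    have hbernoulli : x ^ r * (y - r * (x - y)) ≤ y ^ r * y := by
      rw [← htangent, hypow]
      gcongr
      simpa using one_add_mul_self_le_rpow_one_add hu (by linarith : 1 ≤ r + 1)
    rw [abs_of_nonneg (sub_nonneg.2 hmono), abs_of_nonneg h]
    linarith
  · have hmono : x ^ r ≤ y ^ r := Real.rpow_le_rpow_of_nonpos hy hyx h
    have hbernoulli : y ^ r * y ≤ x ^ r * (y - r * (x - y)) := by
      rw [← htangent, hypow]
      gcongr
      simpa using rpow_one_add_le_one_add_mul_self hu (by linarith : 0 ≤ r + 1) (by linarith)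
    rw [abs_of_nonpos (sub_nonpos.2 hmono), abs_of_nonpos h]
    linarith

lemma sqrt_add_sq_sub_sqrt_add_sq_le {c s t : ℝ} (hc : 0 ≤ c) (hts : t ≤ s) :
    √(c + s ^ 2) - √(c + t ^ 2) ≤ s - t := by
  have ht : t ≤ √(c + t ^ 2) := Real.le_sqrt_of_sq_le (by linarith)
  rw [sub_le_iff_le_add, Real.sqrt_le_left (by linarith [Real.sqrt_nonneg (c + t ^ 2)])]
  have hsq : √(c + t ^ 2) ^ 2 = c + t ^ 2 := Real.sq_sqrt (by positivity)
  linarith [mul_le_mul_of_nonneg_left ht (sub_nonneg.2 hts)]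

lemma abs_add_sq_rpow_sub_mul_le {q c s t : ℝ} (hq : -(1 / 2) ≤ q) (hc : 0 ≤ c) (ht : 0 ≤ t)
    (hts : t ≤ s) :
    |(c + s ^ 2) ^ q - (c + t ^ 2) ^ q| * t ≤ 2 * |q| * (c + s ^ 2) ^ q * (s - t) := by
  have hsqrt (z : ℝ) : (c + z ^ 2) ^ q = √(c + z ^ 2) ^ (2 * q) := by
    rw [← Real.rpow_div_two_eq_sqrt _ (by positivity), mul_div_cancel_left₀ q two_ne_zero]
  rw [hsqrt s, hsqrt t]
  have hyx : √(c + t ^ 2) ≤ √(c + s ^ 2) := by gcongr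
  have hlipschitz : √(c + s ^ 2) - √(c + t ^ 2) ≤ s - t := sqrt_add_sq_sub_sqrt_add_sq_le hc hts
  have hty : t ≤ √(c + t ^ 2) := Real.le_sqrt_of_sq_le (by linarith)
  set x := √(c + s ^ 2)
  set y := √(c + t ^ 2)
  calc |x ^ (2 * q) - y ^ (2 * q)| * t
      ≤ |x ^ (2 * q) - y ^ (2 * q)| * y := by gcongr
    _ ≤ |2 * q| * x ^ (2 * q) * (x - y) :=
        abs_rpow_sub_rpow_mul_le (by linarith) (ht.trans hty) hyx
    _ ≤ |2 * q| * x ^ (2 * q) * (s - t) :=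
        mul_le_mul_of_nonneg_left hlipschitz (by positivity)
    _ = 2 * |q| * x ^ (2 * q) * (s - t) := by rw [abs_mul, abs_two]

lemma rpow_le_rpow_abs_mul_rpow {c x y : ℝ} (r : ℝ) (hc : 1 ≤ c) (hx : 0 ≤ x) (hxy : x ≤ c * y)
    (hyx : y ≤ c * x) : x ^ r ≤ c ^ |r| * y ^ r := by
  have hc₀ : 0 < c := by positivity
  have hy : 0 ≤ y := nonneg_of_mul_nonneg_right (hx.trans hxy) hc₀
  rcases le_total 0 r with hr | hr
  · rw [abs_of_nonneg hr, ← Real.mul_rpow hc₀.le hy]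
    exact Real.rpow_le_rpow hx hxy hr
  rcases hy.eq_or_lt with rfl | hy
  · obtain rfl : x = 0 := by linarith
    exact le_mul_of_one_le_left (Real.rpow_nonneg le_rfl r) (Real.one_le_rpow hc (abs_nonneg r))
  · rw [abs_of_nonpos hr, Real.rpow_neg hc₀.le, ← div_eq_inv_mul,
      le_div_iff₀' (Real.rpow_pos_of_pos hc₀ r), ← Real.mul_rpow hc₀.le hx]
    exact Real.rpow_le_rpow_of_nonpos hy hyx hr

section Seminormed

variable {E : Type*} [SeminormedAddCommGroup E] [NormedSpace ℝ E]

lemma mul_norm_sub_le_two_mul_norm_smul_sub_smul {a b : ℝ} {ξ η : E} (hb : 0 ≤ b) (hba : b ≤ a)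
    (hηξ : ‖η‖ ≤ ‖ξ‖) : a * ‖ξ - η‖ ≤ 2 * ‖a • ξ - b • η‖ := by
  have ha : 0 ≤ a := hb.trans hba
  have hradial : (a - b) * ‖η‖ ≤ ‖a • ξ - b • η‖ := calc
    (a - b) * ‖η‖ ≤ a * ‖ξ‖ - b * ‖η‖ := by linarith [mul_le_mul_of_nonneg_left hηξ ha]
    _ = ‖a • ξ‖ - ‖b • η‖ := by rw [norm_smul_of_nonneg ha, norm_smul_of_nonneg hb]
    _ ≤ ‖a • ξ - b • η‖ := norm_sub_norm_le _ _
  calc a * ‖ξ - η‖ = ‖(a • ξ - b • η) - (a - b) • η‖ := by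
        rw [← norm_smul_of_nonneg ha]
        congr 1
        module
    _ ≤ ‖a • ξ - b • η‖ + (a - b) * ‖η‖ := by
        rw [← norm_smul_of_nonneg (sub_nonneg.2 hba)]
        exact norm_sub_le _ _
    _ ≤ 2 * ‖a • ξ - b • η‖ := by linarith

/-- The auxiliary map `V_p(ξ) = (μ² + |ξ|²)^{(p-2)/4} ξ` of the theory of `p`-growth problems, on an
arbitrary seminormed space. For `μ = 0`, `ξ = 0` and `p < 2` the weight is a junk value, but then
`V_p(0) = 0`, which is the continuous extension when `0 < p`. -/
noncomputable def Vp (p μ : ℝ) (ξ : E) : E :=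
  (μ ^ 2 + ‖ξ‖ ^ 2) ^ ((p - 2) / 4) • ξ

namespace Vp

variable {p μ : ℝ} {ξ η : E}

lemma norm_sub_sub_smul_le (hp : 0 ≤ p) (hηξ : ‖η‖ ≤ ‖ξ‖) :
    ‖Vp p μ ξ - Vp p μ η - (μ ^ 2 + ‖ξ‖ ^ 2) ^ ((p - 2) / 4) • (ξ - η)‖ ≤
      |p - 2| / 2 * (μ ^ 2 + ‖ξ‖ ^ 2) ^ ((p - 2) / 4) * ‖ξ - η‖ := by
  set a := (μ ^ 2 + ‖ξ‖ ^ 2) ^ ((p - 2) / 4) with ha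
  set b := (μ ^ 2 + ‖η‖ ^ 2) ^ ((p - 2) / 4) with hb
  have hsplit : Vp p μ ξ - Vp p μ η - a • (ξ - η) = (a - b) • η := by
    simp only [Vp, ← ha, ← hb]
    module
  calc ‖Vp p μ ξ - Vp p μ η - a • (ξ - η)‖
      = |a - b| * ‖η‖ := by rw [hsplit, norm_smul, Real.norm_eq_abs]
    _ ≤ 2 * |(p - 2) / 4| * a * (‖ξ‖ - ‖η‖) :=
        abs_add_sq_rpow_sub_mul_le (by linarith) (sq_nonneg μ) (norm_nonneg η) hηξ
    _ ≤ 2 * |(p - 2) / 4| * a * ‖ξ - η‖ := by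
        gcongr
        exact norm_sub_norm_le ξ η
    _ = |p - 2| / 2 * a * ‖ξ - η‖ := by
        rw [abs_div, abs_of_pos (by norm_num : (0 : ℝ) < 4)]
        ring

lemma norm_sub_le_of_norm_le (hp : 0 ≤ p) (hηξ : ‖η‖ ≤ ‖ξ‖) :
    ‖Vp p μ ξ - Vp p μ η‖ ≤
      (1 + |p - 2| / 2) * (μ ^ 2 + ‖ξ‖ ^ 2) ^ ((p - 2) / 4) * ‖ξ - η‖ := by
  have herror := norm_sub_sub_smul_le (μ := μ) hp hηξ
  have htriangle := norm_le_norm_add_norm_sub' (Vp p μ ξ - Vp p μ η)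
    ((μ ^ 2 + ‖ξ‖ ^ 2) ^ ((p - 2) / 4) • (ξ - η))
  rw [norm_smul_of_nonneg (by positivity)] at htriangle
  linarith

lemma le_norm_sub_of_norm_le (hp : 0 ≤ p) (hηξ : ‖η‖ ≤ ‖ξ‖) :
    min 1 p / 2 * (μ ^ 2 + ‖ξ‖ ^ 2) ^ ((p - 2) / 4) * ‖ξ - η‖ ≤ ‖Vp p μ ξ - Vp p μ η‖ := by
  set a := (μ ^ 2 + ‖ξ‖ ^ 2) ^ ((p - 2) / 4) with ha
  rcases le_total p 2 with h | h
  · have herror := norm_sub_sub_smul_le (μ := μ) hp hηξ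
    have htriangle := norm_sub_norm_le (a • (ξ - η)) (Vp p μ ξ - Vp p μ η)
    rw [norm_sub_rev (a • _), norm_smul_of_nonneg (by positivity)] at htriangle
    rw [abs_of_nonpos (by linarith), ← ha] at herror
    calc min 1 p / 2 * a * ‖ξ - η‖ ≤ p / 2 * a * ‖ξ - η‖ := by
          gcongr
          exact min_le_right 1 p
      _ ≤ ‖Vp p μ ξ - Vp p μ η‖ := by linarith
  · have hweight : (μ ^ 2 + ‖η‖ ^ 2) ^ ((p - 2) / 4) ≤ a :=
      Real.rpow_le_rpow (by positivity) (by gcongr) (by linarith)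
    have hmonotone : a * ‖ξ - η‖ ≤ 2 * ‖Vp p μ ξ - Vp p μ η‖ :=
      mul_norm_sub_le_two_mul_norm_smul_sub_smul (by positivity) hweight hηξ
    rw [min_eq_left (by linarith)]
    linarith

lemma norm_sub_le (hp : 0 ≤ p) :
    ‖Vp p μ ξ - Vp p μ η‖ ≤ (1 + |p - 2| / 2) * 2 ^ |(p - 2) / 4| *
      (μ ^ 2 + ‖ξ‖ ^ 2 + ‖η‖ ^ 2) ^ ((p - 2) / 4) * ‖ξ - η‖ := by
  wlog hηξ : ‖η‖ ≤ ‖ξ‖ generalizing ξ η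
  · simpa only [norm_sub_rev, add_right_comm] using this (le_of_not_ge hηξ)
  have hsq : ‖η‖ ^ 2 ≤ ‖ξ‖ ^ 2 := by gcongr
  have hweight := rpow_le_rpow_abs_mul_rpow (x := μ ^ 2 + ‖ξ‖ ^ 2)
    (y := μ ^ 2 + ‖ξ‖ ^ 2 + ‖η‖ ^ 2) ((p - 2) / 4) one_le_two (by positivity)
    (by linarith [sq_nonneg μ, sq_nonneg ‖ξ‖, sq_nonneg ‖η‖]) (by linarith [sq_nonneg μ])
  grw [norm_sub_le_of_norm_le hp hηξ, hweight, mul_assoc _ _ (_ ^ _)]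

lemma le_norm_sub (hp : 0 ≤ p) :
    min 1 p / 2 / 2 ^ |(p - 2) / 4| *
      (μ ^ 2 + ‖ξ‖ ^ 2 + ‖η‖ ^ 2) ^ ((p - 2) / 4) * ‖ξ - η‖ ≤ ‖Vp p μ ξ - Vp p μ η‖ := by
  wlog hηξ : ‖η‖ ≤ ‖ξ‖ generalizing ξ η
  · simpa only [norm_sub_rev, add_right_comm] using this (le_of_not_ge hηξ)
  have hsq : ‖η‖ ^ 2 ≤ ‖ξ‖ ^ 2 := by gcongr
  have hweight := rpow_le_rpow_abs_mul_rpow (x := μ ^ 2 + ‖ξ‖ ^ 2 + ‖η‖ ^ 2)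
    (y := μ ^ 2 + ‖ξ‖ ^ 2) ((p - 2) / 4) one_le_two (by positivity)
    (by linarith [sq_nonneg μ]) (by linarith [sq_nonneg μ, sq_nonneg ‖ξ‖, sq_nonneg ‖η‖])
  refine le_trans ?_ (le_norm_sub_of_norm_le hp hηξ)
  rw [div_mul_eq_mul_div, mul_div_assoc]
  gcongr
  rwa [div_le_iff₀' (by positivity)]

end Vp

end Seminormed

theorem Vp_estimate_general {E : Type*} [NormedAddCommGroup E] [NormedSpace ℝ E] {p : ℝ}
    (hp : 0 < p) :
    ∃ c₁ > (0 : ℝ), ∃ c₂ > (0 : ℝ), ∀ (μ : ℝ) (ξ η : E), ξ ≠ η →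
      c₁ * (μ ^ 2 + ‖ξ‖ ^ 2 + ‖η‖ ^ 2) ^ ((p - 2) / 2) ≤
          ‖Vp p μ ξ - Vp p μ η‖ ^ 2 / ‖ξ - η‖ ^ 2 ∧
        ‖Vp p μ ξ - Vp p μ η‖ ^ 2 / ‖ξ - η‖ ^ 2 ≤
          c₂ * (μ ^ 2 + ‖ξ‖ ^ 2 + ‖η‖ ^ 2) ^ ((p - 2) / 2) := by
  refine ⟨(min 1 p / 2 / 2 ^ |(p - 2) / 4|) ^ 2, by positivity,
    ((1 + |p - 2| / 2) * 2 ^ |(p - 2) / 4|) ^ 2, by positivity, fun μ ξ η hne ↦ ?_⟩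
  have hdist : 0 < ‖ξ - η‖ := norm_sub_pos_iff.2 hne
  have hsq : (μ ^ 2 + ‖ξ‖ ^ 2 + ‖η‖ ^ 2) ^ ((p - 2) / 2) =
      ((μ ^ 2 + ‖ξ‖ ^ 2 + ‖η‖ ^ 2) ^ ((p - 2) / 4)) ^ 2 := by
    rw [← Real.rpow_mul_natCast (by positivity)]
    ring_nf
  rw [hsq, ← mul_pow, ← mul_pow, ← div_pow]
  constructor <;> gcongr
  · exact (le_div_iff₀ hdist).2 (Vp.le_norm_sub hp.le)
  · exact (div_le_iff₀ hdist).2 (Vp.norm_sub_le hp.le)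

/-- For `1 < p < ∞` there are constants `c₁, c₂ > 0` (depending on `m, p`) such that for
`V_p(ξ) = (μ² + |ξ|²)^{(p-2)/4} ξ` one has
`c₁ (μ² + |ξ|² + |η|²)^{(p-2)/2} ≤ |V_p ξ - V_p η|² / |ξ - η|² ≤ c₂ (μ² + |ξ|² + |η|²)^{(p-2)/2}`. -/
theorem Vp_estimate (m : ℕ) (hm : 1 ≤ m) (p : ℝ) (hp : 1 < p) :
    ∃ c₁ > (0 : ℝ), ∃ c₂ > (0 : ℝ),
      ∀ μ : ℝ, 0 ≤ μ → ∀ ξ η : EuclideanSpace ℝ (Fin m), ξ ≠ η →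
        c₁ * (μ ^ 2 + ‖ξ‖ ^ 2 + ‖η‖ ^ 2) ^ ((p - 2) / 2) ≤
          ‖(μ ^ 2 + ‖ξ‖ ^ 2) ^ ((p - 2) / 4) • ξ - (μ ^ 2 + ‖η‖ ^ 2) ^ ((p - 2) / 4) • η‖ ^ 2
            / ‖ξ - η‖ ^ 2 ∧
        ‖(μ ^ 2 + ‖ξ‖ ^ 2) ^ ((p - 2) / 4) • ξ - (μ ^ 2 + ‖η‖ ^ 2) ^ ((p - 2) / 4) • η‖ ^ 2
            / ‖ξ - η‖ ^ 2 ≤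
          c₂ * (μ ^ 2 + ‖ξ‖ ^ 2 + ‖η‖ ^ 2) ^ ((p - 2) / 2) := by
  obtain ⟨c₁, hc₁, c₂, hc₂, h⟩ :=
    Vp_estimate_general (E := EuclideanSpace ℝ (Fin m)) (zero_lt_one.trans hp)
  exact ⟨c₁, hc₁, c₂, hc₂, fun μ _ ↦ h μ⟩
end

section
/- Let m ≥ 1 and δ ≥ 0. There exists a constant c₁ = c₁(δ) > 0 such that for every μ ≥ 0 and all ξ, η ∈ ℝ^m: c₁ ⟨V_δ(ξ) − V_δ(η), ξ − η⟩ ≥ |ξ − η|² (μ² + |ξ|² + |η|²)^{δ/2}, where V_δ(ξ) := (μ² + |ξ|²)^{δ/2} ξ and ⟨·,·⟩ is the Euclidean inner product on ℝ^m. -/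
/-! For real weights `a`, `b` one has
`2⟨a ξ - b η, ξ - η⟩ = (a + b)|ξ - η|² + (a - b)(|ξ|² - |η|²)`, and the last term is nonnegative
when the weights are a nondecreasing function of the norm. It remains to bound
`(μ² + |ξ|² + |η|²)^{δ/2}` by a multiple of the sum of the weights `(μ² + |ξ|²)^{δ/2}` and
`(μ² + |η|²)^{δ/2}`. -/

open scoped RealInnerProductSpace

theorem rpow_add_le_two_rpow_mul_add_rpow {x y p : ℝ} (hx : 0 ≤ x) (hy : 0 ≤ y) (hp : 0 ≤ p) :
    (x + y) ^ p ≤ 2 ^ p * (x ^ p + y ^ p) := by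
  wlog hxy : x ≤ y generalizing x y
  · simpa only [add_comm] using this hy hx (le_of_not_ge hxy)
  calc (x + y) ^ p ≤ (2 * y) ^ p := by gcongr; linarith
    _ = 2 ^ p * y ^ p := Real.mul_rpow zero_le_two hy
    _ ≤ 2 ^ p * (x ^ p + y ^ p) := by gcongr; exact le_add_of_nonneg_left (by positivity)

section InnerProductSpace

variable {E : Type*} [NormedAddCommGroup E] [InnerProductSpace ℝ E]

theorem two_mul_inner_smul_sub_smul_sub (a b : ℝ) (x y : E) :
    2 * ⟪a • x - b • y, x - y⟫ =
      (a + b) * ‖x - y‖ ^ 2 + (a - b) * (‖x‖ ^ 2 - ‖y‖ ^ 2) := by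
  rw [norm_sub_sq_real]
  simp only [inner_sub_left, inner_sub_right, real_inner_smul_left,
    real_inner_self_eq_norm_sq, real_inner_comm x y]
  ring

theorem add_mul_norm_sub_sq_le_two_mul_inner_of_monotoneOn {φ : ℝ → ℝ}
    (hφ : MonotoneOn φ (Set.Ici 0)) (x y : E) :
    (φ ‖x‖ + φ ‖y‖) * ‖x - y‖ ^ 2 ≤ 2 * ⟪φ ‖x‖ • x - φ ‖y‖ • y, x - y⟫ := by
  have hsq : MonotoneOn (fun t : ℝ ↦ t ^ 2) (Set.Ici 0) := pow_left_monotoneOn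
  have hcross : 0 ≤ (φ ‖x‖ - φ ‖y‖) * (‖x‖ ^ 2 - ‖y‖ ^ 2) :=
    (hφ.monovaryOn hsq).sub_mul_sub_nonneg (norm_nonneg y) (norm_nonneg x)
  rw [two_mul_inner_smul_sub_smul_sub]
  exact le_add_of_nonneg_right hcross

/-- The map `V_δ(ξ) = (μ² + |ξ|²)^{δ/2} ξ`, with the parameter `μ` made explicit, on a real
inner product space. It is the radial field with weight `t ↦ (μ² + t²)^{δ/2}` in the norm. -/
noncomputable def Vdelta (δ μ : ℝ) (ξ : E) : E :=
  (μ ^ 2 + ‖ξ‖ ^ 2) ^ (δ / 2) • ξ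

theorem add_mul_norm_sub_sq_le_two_mul_inner_Vdelta {δ : ℝ} (hδ : 0 ≤ δ) (μ : ℝ) (ξ η : E) :
    ((μ ^ 2 + ‖ξ‖ ^ 2) ^ (δ / 2) + (μ ^ 2 + ‖η‖ ^ 2) ^ (δ / 2)) * ‖ξ - η‖ ^ 2 ≤
      2 * ⟪Vdelta δ μ ξ - Vdelta δ μ η, ξ - η⟫ := by
  have hweight : MonotoneOn (fun t : ℝ ↦ (μ ^ 2 + t ^ 2) ^ (δ / 2)) (Set.Ici 0) := by
    intro s (hs : 0 ≤ s) t _ hst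
    dsimp only
    gcongr
  exact add_mul_norm_sub_sq_le_two_mul_inner_of_monotoneOn hweight ξ η

theorem Vdelta_monotonicity_general {δ : ℝ} (hδ : 0 ≤ δ) (μ : ℝ) (ξ η : E) :
    ‖ξ - η‖ ^ 2 * (μ ^ 2 + ‖ξ‖ ^ 2 + ‖η‖ ^ 2) ^ (δ / 2) ≤
      2 ^ (δ / 2 + 1) * ⟪Vdelta δ μ ξ - Vdelta δ μ η, ξ - η⟫ := by
  have hsum : μ ^ 2 + ‖ξ‖ ^ 2 + ‖η‖ ^ 2 ≤ (μ ^ 2 + ‖ξ‖ ^ 2) + (μ ^ 2 + ‖η‖ ^ 2) := by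
    gcongr
    exact le_add_of_nonneg_left (sq_nonneg μ)
  calc ‖ξ - η‖ ^ 2 * (μ ^ 2 + ‖ξ‖ ^ 2 + ‖η‖ ^ 2) ^ (δ / 2)
    _ ≤ ‖ξ - η‖ ^ 2 * ((μ ^ 2 + ‖ξ‖ ^ 2) + (μ ^ 2 + ‖η‖ ^ 2)) ^ (δ / 2) := by gcongr
    _ ≤ ‖ξ - η‖ ^ 2 *
          (2 ^ (δ / 2) * ((μ ^ 2 + ‖ξ‖ ^ 2) ^ (δ / 2) + (μ ^ 2 + ‖η‖ ^ 2) ^ (δ / 2))) := by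
      gcongr
      exact rpow_add_le_two_rpow_mul_add_rpow (by positivity) (by positivity) (by positivity)
    _ = 2 ^ (δ / 2) *
          (((μ ^ 2 + ‖ξ‖ ^ 2) ^ (δ / 2) + (μ ^ 2 + ‖η‖ ^ 2) ^ (δ / 2)) * ‖ξ - η‖ ^ 2) := by
      ring
    _ ≤ 2 ^ (δ / 2) * (2 * ⟪Vdelta δ μ ξ - Vdelta δ μ η, ξ - η⟫) :=
      mul_le_mul_of_nonneg_left (add_mul_norm_sub_sq_le_two_mul_inner_Vdelta hδ μ ξ η)
        (by positivity)
    _ = 2 ^ (δ / 2 + 1) * ⟪Vdelta δ μ ξ - Vdelta δ μ η, ξ - η⟫ := by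
      rw [Real.rpow_add_one two_ne_zero, mul_assoc]

end InnerProductSpace

/-- For `δ ≥ 0` there is `c₁ = c₁(δ) > 0` such that, with `V_δ(ξ) = (μ² + |ξ|²)^{δ/2} ξ`,
`c₁ ⟨V_δ(ξ) - V_δ(η), ξ - η⟩ ≥ |ξ - η|² (μ² + |ξ|² + |η|²)^{δ/2}` for all `ξ, η ∈ ℝ^m`. -/
theorem Vdelta_monotonicity (m : ℕ) (hm : 1 ≤ m) (δ : ℝ) (hδ : 0 ≤ δ) :
    ∃ c₁ > (0 : ℝ),
      ∀ μ : ℝ, 0 ≤ μ → ∀ ξ η : EuclideanSpace ℝ (Fin m),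
        ‖ξ - η‖ ^ 2 * (μ ^ 2 + ‖ξ‖ ^ 2 + ‖η‖ ^ 2) ^ (δ / 2) ≤
          c₁ * (inner ℝ ((μ ^ 2 + ‖ξ‖ ^ 2) ^ (δ / 2) • ξ - (μ ^ 2 + ‖η‖ ^ 2) ^ (δ / 2) • η)
            (ξ - η) : ℝ) :=
  ⟨2 ^ (δ / 2 + 1), by positivity, fun μ _ ξ η ↦ Vdelta_monotonicity_general hδ μ ξ η⟩
end
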